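/- arXiv:1107.4378 — 3 statements merged into one kernel-verified Lean document; each statement's English description precedes it below -/
import Mathlib

section
/- There exist a constant c > 0 and a threshold m₀ such that the following holds for all m ≥ m₀. Let m' = ⌈m^{2/3}⌉ and let n' be a positive integer with n' ≤ 2·m^{1/3}. Then for every real s with 0 < s ≤ m^{1/6}, the random cuckoo graph with n' edges on parts of size m' satisfies: the probability that more than s vertices v have C(v) > 8 is at most m^{−c·√s}. -/
open Classical

/-- Adjacency: item `x` gives an edge from left vertex `h₀ x` to right vertex `h₁ x`. -/
def cuckooAdj (n m : ℕ) (h₀ h₁ : Fin n → Fin m) (a b : Fin m ⊕ Fin m) : Prop :=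
  ∃ x : Fin n, a = Sum.inl (h₀ x) ∧ b = Sum.inr (h₁ x)

/-- Connectivity in the cuckoo graph: equivalence generated by adjacency. -/
def cuckooConn (n m : ℕ) (h₀ h₁ : Fin n → Fin m) : (Fin m ⊕ Fin m) → (Fin m ⊕ Fin m) → Prop :=
  Relation.EqvGen (cuckooAdj n m h₀ h₁)

/-- `C(v)`: number of edges (items, with multiplicity) in the component of `v`. -/
noncomputable def cuckooC (n m : ℕ) (h₀ h₁ : Fin n → Fin m) (v : Fin m ⊕ Fin m) : ℕ :=
  Nat.card {x : Fin n // cuckooConn n m h₀ h₁ (Sum.inl (h₀ x)) v}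

/-- `V(v)`: number of vertices in the component of `v`. -/
noncomputable def cuckooV (n m : ℕ) (h₀ h₁ : Fin n → Fin m) (v : Fin m ⊕ Fin m) : ℕ :=
  Nat.card {u : Fin m ⊕ Fin m // cuckooConn n m h₀ h₁ u v}

/-- `B_v`: cyclotomic number of the component of `v`, `C(v) − V(v) + 1`. -/
noncomputable def cuckooB (n m : ℕ) (h₀ h₁ : Fin n → Fin m) (v : Fin m ⊕ Fin m) : ℕ :=
  cuckooC n m h₀ h₁ v + 1 - cuckooV n m h₀ h₁ v

/-- The sample space: a pair of hash functions chosen uniformly at random. -/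
abbrev HashPair (n m : ℕ) := (Fin n → Fin m) × (Fin n → Fin m)

/-- Probability of an event under uniformly random hash functions. -/
noncomputable def cuckooPr (n m : ℕ) (E : HashPair n m → Prop) : ℝ :=
  (Nat.card {ω : HashPair n m // E ω} : ℝ) / (Nat.card (HashPair n m) : ℝ)

/-- Expectation of a real random variable under uniformly random hash functions. -/
noncomputable def cuckooE (n m : ℕ) (f : HashPair n m → ℝ) : ℝ :=
  (∑ ω : HashPair n m, f ω) / (Nat.card (HashPair n m) : ℝ)

/-- `X_i`: number of vertices lying in components with exactly `i` edges. -/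
noncomputable def cuckooX (n m : ℕ) (h₀ h₁ : Fin n → Fin m) (i : ℕ) : ℕ :=
  Nat.card {v : Fin m ⊕ Fin m // cuckooC n m h₀ h₁ v = i}

/-- The setoid of connected components. -/
def cuckooSetoid (n m : ℕ) (h₀ h₁ : Fin n → Fin m) : Setoid (Fin m ⊕ Fin m) :=
  ⟨cuckooConn n m h₀ h₁, Relation.EqvGen.is_equivalence _⟩

/-- `ē(G) = ∑_H max(e(H),0)`, the total excess over all components
(`ℕ`-subtraction realizes the `max` with `0`). -/
noncomputable def cuckooEbar (n m : ℕ) (h₀ h₁ : Fin n → Fin m) : ℕ :=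
  ∑ᶠ c : Quotient (cuckooSetoid n m h₀ h₁),
    (Nat.card {x : Fin n // Quotient.mk (cuckooSetoid n m h₀ h₁) (Sum.inl (h₀ x)) = c}
      - Nat.card {u : Fin m ⊕ Fin m // Quotient.mk (cuckooSetoid n m h₀ h₁) u = c})

/-!
If `k` edges lie in components with more than `d` edges, then, collecting edges greedily along
components and opening a new component only when the previous ones are exhausted, one finds a set
`S` of exactly `k` edges meeting at most `⌈k / (d + 1)⌉` components and hence having at most
`t = k + ⌈k / (d + 1)⌉` endpoints. For a fixed `S` and a fixed set `W` of `t` vertices, all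
endpoints of `S` fall into `W` with probability at most `(t / 2m) ^ (2k)`. A union bound over `S`
and `W` gives at most `(e³ n) ^ k / m ^ (2k - t)`, since the factorials in the two binomial
coefficients absorb the powers of `t`. When `n = O(√m)` and `t ≤ 7k / 5`, this is exponentially
small in `k log m`. More than `s` vertices in such components force `k ≥ s / 2` edges, because
each edge has two endpoints.
-/

section Estimates

lemma card_filter_image_subset {α β : Type*} [Fintype α] [Fintype β] [DecidableEq α]
    [DecidableEq β] (S : Finset α) (A : Finset β) :
    (Finset.univ.filter fun f : α → β => S.image f ⊆ A).card =
      A.card ^ S.card * Fintype.card β ^ (Fintype.card α - S.card) := by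
  have hpi : (Finset.univ.filter fun f : α → β => S.image f ⊆ A) =
      Fintype.piFinset fun x => if x ∈ S then A else Finset.univ := by
    ext f
    simp only [Finset.mem_filter_univ, Finset.image_subset_iff, Fintype.mem_piFinset]
    refine forall_congr' fun x => ?_
    split_ifs with hx <;> simp [hx]
  simp only [hpi, Fintype.card_piFinset, apply_ite Finset.card, Finset.prod_ite,
    Finset.prod_const, Finset.filter_univ_mem, Finset.filter_not, Finset.card_univ,
    ← Finset.compl_eq_univ_sdiff, Finset.card_compl]

lemma choose_le_exp_one_mul_div_pow (n k : ℕ) :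
    (n.choose k : ℝ) ≤ (Real.exp 1 * n / k) ^ k := by
  rcases k.eq_zero_or_pos with rfl | hk
  · simp
  · calc (n.choose k : ℝ) ≤ (n : ℝ) ^ k / k.factorial := Nat.choose_le_pow_div k n
      _ = (n / k : ℝ) ^ k * ((k : ℝ) ^ k / k.factorial) := by
          rw [div_pow]
          field_simp
      _ ≤ (n / k : ℝ) ^ k * Real.exp k := by
          gcongr
          exact Real.pow_div_factorial_le_exp _ k.cast_nonneg k
      _ = (Real.exp 1 * n / k) ^ k := by
          rw [← Real.exp_one_pow, ← mul_pow, mul_comm, mul_div_assoc]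

lemma choose_mul_div_pow_le {M t l : ℕ} (hM : 0 < M) (htl : t ≤ l) :
    (M.choose t : ℝ) * ((t : ℝ) / M) ^ l ≤ Real.exp t * ((t : ℝ) / M) ^ (l - t) := by
  rcases t.eq_zero_or_pos with rfl | ht
  · simp
  · calc (M.choose t : ℝ) * ((t : ℝ) / M) ^ l
        ≤ (Real.exp 1 * M / t) ^ t * ((t : ℝ) / M) ^ l := by
          gcongr
          exact choose_le_exp_one_mul_div_pow M t
      _ = (Real.exp 1 * M / t) ^ t * (((t : ℝ) / M) ^ t * ((t : ℝ) / M) ^ (l - t)) := by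
          rw [← pow_add, Nat.add_sub_cancel' htl]
      _ = Real.exp t * ((t : ℝ) / M) ^ (l - t) := by
          rw [← mul_assoc, ← mul_pow, div_mul_div_cancel₀ (by positivity),
            mul_div_cancel_right₀ _ (by positivity), Real.exp_one_pow]

lemma choose_mul_choose_mul_pow_le (n : ℕ) {m k t : ℕ} (hm : 0 < m) (hkt : k ≤ t)
    (htk : t ≤ 2 * k) :
    (n.choose k : ℝ) * ((2 * m).choose t * ((t : ℝ) / (2 * m)) ^ (2 * k)) ≤
      (Real.exp 3 * n) ^ k / (m : ℝ) ^ (2 * k - t) := by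
  rcases k.eq_zero_or_pos with rfl | hk
  · obtain rfl : t = 0 := by omega
    simp
  have hk1 : (1 : ℝ) ≤ k := mod_cast hk
  have htR : (t : ℝ) ≤ 2 * k := mod_cast htk
  have hW := choose_mul_div_pow_le (mul_pos two_pos hm) htk
  push_cast at hW
  calc (n.choose k : ℝ) * ((2 * m).choose t * ((t : ℝ) / (2 * m)) ^ (2 * k))
      ≤ (Real.exp 1 * n / k) ^ k * (Real.exp t * ((t : ℝ) / (2 * m)) ^ (2 * k - t)) := by
        gcongr
        exact choose_le_exp_one_mul_div_pow n k
    _ ≤ (Real.exp 1 * n / k) ^ k * (Real.exp (2 * k) * (2 * k / (2 * m)) ^ (2 * k - t)) := by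
        gcongr
    _ = (Real.exp 3 * n) ^ k / (m : ℝ) ^ (2 * k - t) * ((k : ℝ) ^ (2 * k - t) / (k : ℝ) ^ k) := by
        have hexp : Real.exp 3 = Real.exp 1 * Real.exp 2 := by
          rw [← Real.exp_add]
          norm_num
        rw [mul_comm (2 : ℝ) k, Real.exp_nat_mul, mul_comm (k : ℝ) 2,
          mul_div_mul_left _ _ two_ne_zero, hexp, div_pow, div_pow]
        simp only [mul_pow]
        ring
    _ ≤ (Real.exp 3 * n) ^ k / (m : ℝ) ^ (2 * k - t) := by
        refine mul_le_of_le_one_right (by positivity) (div_le_one_of_le₀ ?_ (by positivity))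
        exact pow_le_pow_right₀ hk1 (by omega)

lemma five_mul_add_div_succ_le {d k : ℕ} (hd : 3 ≤ d) (hk : d + 1 ≤ k) :
    5 * ((k + d) / (d + 1)) ≤ 2 * k := by
  have hmul := Nat.mul_div_le (k + d) (d + 1)
  set r := (k + d) / (d + 1)
  rcases r.eq_zero_or_pos with hr | hr
  · omega
  · have : 4 * (r - 1) ≤ (d + 1) * (r - 1) := Nat.mul_le_mul_right _ (by omega)
    rw [Nat.mul_sub_one (d + 1)] at this
    omega

lemma pow_div_pow_le_rpow_neg {x y z : ℝ} {k l : ℕ} (hx : 1 ≤ x) (hy : 0 ≤ y)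
    (hyx : y ≤ x ^ (11 / 30 : ℝ)) (hz : x ^ (2 / 3 : ℝ) ≤ z) (hkl : 3 * k ≤ 5 * l) :
    y ^ k / z ^ l ≤ x ^ (-(k / 30) : ℝ) := by
  have hx0 : 0 < x := one_pos.trans_le hx
  have hklR : (3 * k : ℝ) ≤ 5 * l := mod_cast hkl
  calc y ^ k / z ^ l ≤ (x ^ (11 / 30 : ℝ)) ^ k / (x ^ (2 / 3 : ℝ)) ^ l := by gcongr
    _ = x ^ (11 / 30 * k - 2 / 3 * l : ℝ) := by
        rw [← Real.rpow_mul_natCast hx0.le, ← Real.rpow_mul_natCast hx0.le, Real.rpow_sub hx0]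
    _ ≤ x ^ (-(k / 30) : ℝ) := Real.rpow_le_rpow_of_exponent_le hx (by linarith)

lemma eventually_mul_rpow_third_le (A : ℝ) :
    ∀ᶠ x : ℝ in Filter.atTop, A * x ^ (1 / 3 : ℝ) ≤ x ^ (11 / 30 : ℝ) := by
  have hA := (tendsto_rpow_atTop (by norm_num : (0 : ℝ) < 1 / 30)).eventually_ge_atTop A
  filter_upwards [hA, Filter.eventually_gt_atTop 0] with x hx hx0
  calc A * x ^ (1 / 3 : ℝ) ≤ x ^ (1 / 30 : ℝ) * x ^ (1 / 3 : ℝ) := by gcongr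
    _ = x ^ (11 / 30 : ℝ) := by
        rw [← Real.rpow_add hx0]
        norm_num

lemma sqrt_le_max_one (s : ℝ) : √s ≤ max 1 s := by
  refine Real.sqrt_le_iff.2 ⟨zero_le_one.trans (le_max_left 1 s), ?_⟩
  exact (le_max_right 1 s).trans (le_self_pow₀ (le_max_left 1 s) two_ne_zero)

end Estimates

section EdgeSets

variable {n m : ℕ} (ω : HashPair n m)

/-- The set of vertices incident to an edge of `S`. -/
def cuckooEndpoints (S : Finset (Fin n)) : Finset (Fin m ⊕ Fin m) :=
  (S.image ω.1).disjSum (S.image ω.2)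

/-- The set of edges lying in components with more than `d` edges. An edge is assigned to the
component of its left endpoint. -/
noncomputable def cuckooLargeEdges (d : ℕ) : Finset (Fin n) :=
  {x | d < cuckooC n m ω.1 ω.2 (Sum.inl (ω.1 x))}

/-- The connected component containing the edge `x`. -/
def cuckooEdgeComp (x : Fin n) : Quotient (cuckooSetoid n m ω.1 ω.2) :=
  Quotient.mk _ (Sum.inl (ω.1 x))

/-- A set of edges is closed if it contains every edge that shares an endpoint with one of its
edges, that is, if it is a union of edge sets of components. -/
def IsCuckooClosed (S : Finset (Fin n)) : Prop :=
  ∀ y, Sum.inl (ω.1 y) ∈ cuckooEndpoints ω S ∨ Sum.inr (ω.2 y) ∈ cuckooEndpoints ω S → y ∈ S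

variable {ω} {S : Finset (Fin n)} {x y : Fin n} {u v : Fin m ⊕ Fin m} {d : ℕ}

lemma inl_mem_cuckooEndpoints (hx : x ∈ S) : Sum.inl (ω.1 x) ∈ cuckooEndpoints ω S :=
  Finset.inl_mem_disjSum.2 (Finset.mem_image_of_mem _ hx)

lemma inr_mem_cuckooEndpoints (hx : x ∈ S) : Sum.inr (ω.2 x) ∈ cuckooEndpoints ω S :=
  Finset.inr_mem_disjSum.2 (Finset.mem_image_of_mem _ hx)

lemma mem_cuckooEndpoints :
    v ∈ cuckooEndpoints ω S ↔ ∃ x ∈ S, Sum.inl (ω.1 x) = v ∨ Sum.inr (ω.2 x) = v := by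
  cases v <;> simp [cuckooEndpoints]

lemma cuckooEndpoints_insert :
    cuckooEndpoints ω (insert y S) =
      insert (Sum.inl (ω.1 y)) (insert (Sum.inr (ω.2 y)) (cuckooEndpoints ω S)) := by
  ext v
  cases v <;> simp [cuckooEndpoints]

lemma card_cuckooEndpoints_insert_le :
    (cuckooEndpoints ω (insert y S)).card ≤ (cuckooEndpoints ω S).card + 2 := by
  rw [cuckooEndpoints_insert]
  exact (Finset.card_insert_le _ _).trans (Nat.succ_le_succ (Finset.card_insert_le _ _))

lemma card_cuckooEndpoints_insert_le_of_mem
    (h : Sum.inl (ω.1 y) ∈ cuckooEndpoints ω S ∨ Sum.inr (ω.2 y) ∈ cuckooEndpoints ω S) :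
    (cuckooEndpoints ω (insert y S)).card ≤ (cuckooEndpoints ω S).card + 1 := by
  rw [cuckooEndpoints_insert]
  rcases h with h | h
  · rw [Finset.insert_eq_of_mem (Finset.mem_insert_of_mem h)]
    exact Finset.card_insert_le _ _
  · rw [Finset.insert_eq_of_mem h]
    exact Finset.card_insert_le _ _

lemma card_cuckooEndpoints_le : (cuckooEndpoints ω S).card ≤ 2 * S.card := by
  rw [cuckooEndpoints, Finset.card_disjSum, two_mul]
  exact add_le_add Finset.card_image_le Finset.card_image_le

lemma cuckooConn_inl_inr (x : Fin n) :
    cuckooConn n m ω.1 ω.2 (Sum.inl (ω.1 x)) (Sum.inr (ω.2 x)) :=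
  Relation.EqvGen.rel _ _ ⟨x, rfl, rfl⟩

lemma cuckooC_eq_of_cuckooConn (h : cuckooConn n m ω.1 ω.2 u v) :
    cuckooC n m ω.1 ω.2 u = cuckooC n m ω.1 ω.2 v :=
  Nat.card_congr <| Equiv.subtypeEquivRight fun _ =>
    ⟨fun hu => hu.trans _ _ _ h, fun hv => hv.trans _ _ _ (h.symm _ _)⟩

lemma cuckooEdgeComp_eq_iff :
    cuckooEdgeComp ω x = cuckooEdgeComp ω y ↔
      cuckooConn n m ω.1 ω.2 (Sum.inl (ω.1 x)) (Sum.inl (ω.1 y)) :=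
  Quotient.eq

lemma cuckooEdgeComp_mem_image_of_mem_cuckooEndpoints
    (h : Sum.inl (ω.1 y) ∈ cuckooEndpoints ω S ∨ Sum.inr (ω.2 y) ∈ cuckooEndpoints ω S) :
    cuckooEdgeComp ω y ∈ S.image (cuckooEdgeComp ω) := by
  simp only [cuckooEndpoints, Finset.inl_mem_disjSum, Finset.inr_mem_disjSum,
    Finset.mem_image] at h
  rcases h with ⟨x, hx, hxy⟩ | ⟨x, hx, hxy⟩ <;>
    refine Finset.mem_image.2 ⟨x, hx, cuckooEdgeComp_eq_iff.2 ?_⟩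
  · rw [hxy]
    exact .refl _
  · have hx' := cuckooConn_inl_inr (ω := ω) x
    rw [hxy] at hx'
    exact hx'.trans _ _ _ ((cuckooConn_inl_inr y).symm _ _)

lemma cuckooC_eq_card_filter (v : Fin m ⊕ Fin m) :
    cuckooC n m ω.1 ω.2 v =
      (Finset.univ.filter fun x => cuckooConn n m ω.1 ω.2 (Sum.inl (ω.1 x)) v).card :=
  Nat.subtype_card _ fun _ => Finset.mem_filter_univ _

lemma mem_cuckooLargeEdges :
    x ∈ cuckooLargeEdges ω d ↔ d < cuckooC n m ω.1 ω.2 (Sum.inl (ω.1 x)) :=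
  Finset.mem_filter_univ x

lemma mem_cuckooLargeEdges_of_mem_image (hS : S ⊆ cuckooLargeEdges ω d)
    (hy : cuckooEdgeComp ω y ∈ S.image (cuckooEdgeComp ω)) : y ∈ cuckooLargeEdges ω d := by
  obtain ⟨x, hx, hxy⟩ := Finset.mem_image.1 hy
  rw [mem_cuckooLargeEdges, ← cuckooC_eq_of_cuckooConn (cuckooEdgeComp_eq_iff.1 hxy)]
  exact mem_cuckooLargeEdges.1 (hS hx)

lemma isCuckooClosed_univ : IsCuckooClosed ω Finset.univ :=
  fun y _ => Finset.mem_univ y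

namespace IsCuckooClosed

lemma mem_cuckooEndpoints_iff (hS : IsCuckooClosed ω S) (h : cuckooConn n m ω.1 ω.2 u v) :
    u ∈ cuckooEndpoints ω S ↔ v ∈ cuckooEndpoints ω S := by
  induction h with
  | rel a b hab =>
    obtain ⟨y, rfl, rfl⟩ := hab
    exact ⟨fun h => inr_mem_cuckooEndpoints (hS y (.inl h)),
      fun h => inl_mem_cuckooEndpoints (hS y (.inr h))⟩
  | refl a => rfl
  | symm a b _ ih => exact ih.symm
  | trans a b c _ _ ih₁ ih₂ => exact ih₁.trans ih₂

lemma mem_of_cuckooEdgeComp_eq (hS : IsCuckooClosed ω S) (hx : x ∈ S)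
    (h : cuckooEdgeComp ω y = cuckooEdgeComp ω x) : y ∈ S :=
  hS y <| .inl <| (hS.mem_cuckooEndpoints_iff (cuckooEdgeComp_eq_iff.1 h)).2 <|
    inl_mem_cuckooEndpoints hx

lemma mul_card_image_le_card (hS : IsCuckooClosed ω S) (hlarge : S ⊆ cuckooLargeEdges ω d) :
    (d + 1) * (S.image (cuckooEdgeComp ω)).card ≤ S.card := by
  refine Finset.mul_card_image_le_card S (d + 1) fun c hc => ?_
  obtain ⟨x, hx, rfl⟩ := Finset.mem_image.1 hc
  have hC := mem_cuckooLargeEdges.1 (hlarge hx)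
  rw [cuckooC_eq_card_filter] at hC
  refine hC.trans_le (Finset.card_le_card fun y hy => ?_)
  have hyx := cuckooEdgeComp_eq_iff.2 (Finset.mem_filter_univ y |>.1 hy)
  exact Finset.mem_filter.2 ⟨hS.mem_of_cuckooEdgeComp_eq hx hyx, hyx⟩

end IsCuckooClosed

/-- Edges are added one at a time, adjacent to the current set whenever possible. A fresh component
is entered only when the current set is closed, hence a union of components of more than `d`
edges. -/
lemma exists_subset_cuckooLargeEdges_card_image_le (k : ℕ)
    (hk : k ≤ (cuckooLargeEdges ω d).card) :
    ∃ S ⊆ cuckooLargeEdges ω d, S.card = k ∧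
      (cuckooEndpoints ω S).card ≤ k + (S.image (cuckooEdgeComp ω)).card ∧
      (d + 1) * (S.image (cuckooEdgeComp ω)).card ≤ k + d := by
  induction k with
  | zero => exact ⟨∅, by simp [cuckooEndpoints]⟩
  | succ k ih =>
    obtain ⟨S, hS, hcard, hends, hcomps⟩ := ih (by omega)
    by_cases hclosed : IsCuckooClosed ω S
    · obtain ⟨y, hy, hyS⟩ : ∃ y ∈ cuckooLargeEdges ω d, y ∉ S :=
        Finset.exists_mem_notMem_of_card_lt_card (by omega)
      have hnew : cuckooEdgeComp ω y ∉ S.image (cuckooEdgeComp ω) := fun hmem => by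
        obtain ⟨x, hx, hxy⟩ := Finset.mem_image.1 hmem
        exact hyS (hclosed.mem_of_cuckooEdgeComp_eq hx hxy.symm)
      have hends' := card_cuckooEndpoints_insert_le (ω := ω) (y := y) (S := S)
      have hcomps' := hclosed.mul_card_image_le_card hS
      refine ⟨insert y S, Finset.insert_subset hy hS, ?_, ?_, ?_⟩
      · rw [Finset.card_insert_of_notMem hyS, hcard]
      · rw [Finset.image_insert, Finset.card_insert_of_notMem hnew]
        omega
      · rw [Finset.image_insert, Finset.card_insert_of_notMem hnew, mul_add]
        omega
    · simp only [IsCuckooClosed, not_forall] at hclosed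
      obtain ⟨y, hadj, hyS⟩ := hclosed
      have hold := cuckooEdgeComp_mem_image_of_mem_cuckooEndpoints hadj
      have hends' := card_cuckooEndpoints_insert_le_of_mem hadj
      refine ⟨insert y S,
        Finset.insert_subset (mem_cuckooLargeEdges_of_mem_image hS hold) hS, ?_, ?_, ?_⟩
      · rw [Finset.card_insert_of_notMem hyS, hcard]
      · rw [Finset.image_insert, Finset.insert_eq_of_mem hold]
        omega
      · rw [Finset.image_insert, Finset.insert_eq_of_mem hold]
        omega

lemma exists_card_eq_card_cuckooEndpoints_le {k : ℕ} (hk : k ≤ (cuckooLargeEdges ω d).card) :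
    ∃ S : Finset (Fin n), S.card = k ∧ (cuckooEndpoints ω S).card ≤ k + (k + d) / (d + 1) := by
  obtain ⟨S, -, hcard, hends, hcomps⟩ := exists_subset_cuckooLargeEdges_card_image_le k hk
  have hdiv := (Nat.le_div_iff_mul_le d.succ_pos).2 ((mul_comm _ _).trans_le hcomps)
  exact ⟨S, hcard, hends.trans (Nat.add_le_add_left hdiv k)⟩

lemma mem_cuckooEndpoints_cuckooLargeEdges (hv : d < cuckooC n m ω.1 ω.2 v) :
    v ∈ cuckooEndpoints ω (cuckooLargeEdges ω d) := by
  obtain ⟨⟨⟨x, hxv⟩⟩, -⟩ := Nat.card_pos_iff.1 (d.zero_le.trans_lt hv)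
  obtain ⟨y, -, hy⟩ := mem_cuckooEndpoints.1 <|
    (isCuckooClosed_univ.mem_cuckooEndpoints_iff hxv).1
      (inl_mem_cuckooEndpoints (Finset.mem_univ x))
  refine mem_cuckooEndpoints.2 ⟨y, mem_cuckooLargeEdges.2 ?_, hy⟩
  rcases hy with rfl | rfl
  · exact hv
  · rwa [cuckooC_eq_of_cuckooConn (cuckooConn_inl_inr y)]

lemma card_lt_cuckooC_le :
    Nat.card {v // d < cuckooC n m ω.1 ω.2 v} ≤ 2 * (cuckooLargeEdges ω d).card := by
  rw [Nat.subtype_card (Finset.univ.filter fun v => d < cuckooC n m ω.1 ω.2 v) (by simp)]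
  refine (Finset.card_le_card fun v hv => ?_).trans
    (card_cuckooEndpoints_le (ω := ω))
  exact mem_cuckooEndpoints_cuckooLargeEdges (Finset.mem_filter_univ v |>.1 hv)

lemma lt_card_cuckooLargeEdges (hv : d < cuckooC n m ω.1 ω.2 v) :
    d < (cuckooLargeEdges ω d).card := by
  refine hv.trans_le ?_
  rw [cuckooC_eq_card_filter]
  refine Finset.card_le_card fun x hx => mem_cuckooLargeEdges.2 ?_
  rwa [cuckooC_eq_of_cuckooConn (Finset.mem_filter_univ x |>.1 hx)]

end EdgeSets

section Probability

variable {n m : ℕ} {E F : HashPair n m → Prop}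

lemma card_hashPair : Nat.card (HashPair n m) = m ^ (2 * n) := by
  rw [Nat.card_prod, Nat.card_fun, Nat.card_fin, Nat.card_fin, two_mul, pow_add]

lemma cuckooPr_eq_card_filter_div [DecidablePred E] :
    cuckooPr n m E = ((Finset.univ.filter E).card : ℝ) / (m : ℝ) ^ (2 * n) := by
  rw [cuckooPr, card_hashPair, Nat.subtype_card (Finset.univ.filter E) (by simp), Nat.cast_pow]

lemma cuckooPr_mono (h : ∀ ω, E ω → F ω) : cuckooPr n m E ≤ cuckooPr n m F := by
  rw [cuckooPr_eq_card_filter_div, cuckooPr_eq_card_filter_div]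
  gcongr with ω
  exact h ω

lemma cuckooPr_exists_mem_le_sum {ι : Type*} (T : Finset ι) (E : ι → HashPair n m → Prop) :
    cuckooPr n m (fun ω => ∃ i ∈ T, E i ω) ≤ ∑ i ∈ T, cuckooPr n m (E i) := by
  simp only [cuckooPr_eq_card_filter_div, ← Finset.sum_div]
  gcongr
  have hunion : (Finset.univ.filter fun ω => ∃ i ∈ T, E i ω) =
      T.biUnion fun i => Finset.univ.filter (E i) := by
    ext ω
    simp
  rw [hunion]
  exact_mod_cast Finset.card_biUnion_le

lemma cuckooPr_cuckooEndpoints_subset (hm : 0 < m) (S : Finset (Fin n))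
    (W : Finset (Fin m ⊕ Fin m)) :
    cuckooPr n m (fun ω => cuckooEndpoints ω S ⊆ W) =
      ((W.toLeft.card : ℝ) * W.toRight.card / (m : ℝ) ^ 2) ^ S.card := by
  have hprod : (Finset.univ.filter fun ω : HashPair n m => cuckooEndpoints ω S ⊆ W) =
      (Finset.univ.filter fun f => S.image f ⊆ W.toLeft) ×ˢ
        (Finset.univ.filter fun f => S.image f ⊆ W.toRight) := by
    ext ω
    simp only [cuckooEndpoints, Finset.disjSum_subset, Finset.mem_filter_univ,
      Finset.mem_product]
  have hpow : ((m : ℝ) ^ 2) ^ n = ((m : ℝ) ^ 2) ^ S.card * ((m : ℝ) ^ 2) ^ (n - S.card) := by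
    rw [← pow_add, Nat.add_sub_cancel' (card_finset_fin_le S)]
  rw [cuckooPr_eq_card_filter_div, hprod, Finset.card_product, card_filter_image_subset,
    card_filter_image_subset, Fintype.card_fin, Fintype.card_fin, pow_mul, div_pow,
    div_eq_div_iff (by positivity) (by positivity), hpow]
  push_cast
  ring

lemma cuckooPr_cuckooEndpoints_subset_le (hm : 0 < m) (S : Finset (Fin n))
    (W : Finset (Fin m ⊕ Fin m)) :
    cuckooPr n m (fun ω => cuckooEndpoints ω S ⊆ W) ≤
      ((W.card : ℝ) / (2 * m)) ^ (2 * S.card) := by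
  rw [cuckooPr_cuckooEndpoints_subset hm, pow_mul]
  gcongr
  calc (W.toLeft.card : ℝ) * W.toRight.card / (m : ℝ) ^ 2
      = 4 * W.toLeft.card * W.toRight.card / (2 * m : ℝ) ^ 2 := by ring
    _ ≤ (W.toLeft.card + W.toRight.card : ℝ) ^ 2 / (2 * m : ℝ) ^ 2 := by
        gcongr
        exact four_mul_le_sq_add _ _
    _ = (W.card / (2 * m) : ℝ) ^ 2 := by
        rw [div_pow, ← W.card_toLeft_add_card_toRight, Nat.cast_add]

lemma cuckooPr_card_cuckooEndpoints_le (hm : 0 < m) (S : Finset (Fin n)) {t : ℕ}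
    (ht : t ≤ 2 * m) :
    cuckooPr n m (fun ω => (cuckooEndpoints ω S).card ≤ t) ≤
      (2 * m).choose t * ((t : ℝ) / (2 * m)) ^ (2 * S.card) := by
  have hcard : (Finset.univ : Finset (Fin m ⊕ Fin m)).card = 2 * m := by
    simp [two_mul]
  calc cuckooPr n m (fun ω => (cuckooEndpoints ω S).card ≤ t)
      ≤ cuckooPr n m (fun ω => ∃ W ∈ Finset.univ.powersetCard t, cuckooEndpoints ω S ⊆ W) := by
        refine cuckooPr_mono fun ω hω => ?_
        obtain ⟨W, hSW, hW, hWt⟩ := Finset.exists_subsuperset_card_eq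
          (Finset.subset_univ (cuckooEndpoints ω S)) hω (hcard ▸ ht)
        exact ⟨W, Finset.mem_powersetCard.2 ⟨hW, hWt⟩, hSW⟩
    _ ≤ ∑ W ∈ Finset.univ.powersetCard t, cuckooPr n m (fun ω => cuckooEndpoints ω S ⊆ W) :=
        cuckooPr_exists_mem_le_sum _ _
    _ ≤ ∑ _W ∈ (Finset.univ : Finset (Fin m ⊕ Fin m)).powersetCard t,
          ((t : ℝ) / (2 * m)) ^ (2 * S.card) := by
        refine Finset.sum_le_sum fun W hW => ?_
        rw [← (Finset.mem_powersetCard.1 hW).2]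
        exact cuckooPr_cuckooEndpoints_subset_le hm S W
    _ = (2 * m).choose t * ((t : ℝ) / (2 * m)) ^ (2 * S.card) := by
        rw [Finset.sum_const, Finset.card_powersetCard, hcard, nsmul_eq_mul]

lemma cuckooPr_exists_card_cuckooEndpoints_le (hm : 0 < m) (k : ℕ) {t : ℕ} (ht : t ≤ 2 * m) :
    cuckooPr n m (fun ω => ∃ S : Finset (Fin n), S.card = k ∧ (cuckooEndpoints ω S).card ≤ t) ≤
      n.choose k * ((2 * m).choose t * ((t : ℝ) / (2 * m)) ^ (2 * k)) := by
  calc cuckooPr n m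
        (fun ω => ∃ S : Finset (Fin n), S.card = k ∧ (cuckooEndpoints ω S).card ≤ t)
      ≤ cuckooPr n m
          (fun ω => ∃ S ∈ Finset.univ.powersetCard k, (cuckooEndpoints ω S).card ≤ t) :=
        cuckooPr_mono fun ω ⟨S, hS, hends⟩ =>
          ⟨S, Finset.mem_powersetCard.2 ⟨S.subset_univ, hS⟩, hends⟩
    _ ≤ ∑ S ∈ Finset.univ.powersetCard k,
          cuckooPr n m (fun ω => (cuckooEndpoints ω S).card ≤ t) :=
        cuckooPr_exists_mem_le_sum _ _
    _ ≤ ∑ _S ∈ (Finset.univ : Finset (Fin n)).powersetCard k,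
          ((2 * m).choose t * ((t : ℝ) / (2 * m)) ^ (2 * k)) := by
        refine Finset.sum_le_sum fun S hS => ?_
        rw [← (Finset.mem_powersetCard.1 hS).2]
        exact cuckooPr_card_cuckooEndpoints_le hm S ht
    _ = n.choose k * ((2 * m).choose t * ((t : ℝ) / (2 * m)) ^ (2 * k)) := by
        rw [Finset.sum_const, Finset.card_powersetCard, Finset.card_univ, Fintype.card_fin,
          nsmul_eq_mul]

end Probability

section TailBound

variable {n m d k : ℕ}

lemma cuckooPr_le_card_cuckooLargeEdges_le (hm : 0 < m) (hnm : n ≤ m) :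
    cuckooPr n m (fun ω => k ≤ (cuckooLargeEdges ω d).card) ≤
      (Real.exp 3 * n) ^ k / (m : ℝ) ^ (k - (k + d) / (d + 1)) := by
  rcases lt_or_ge n k with hnk | hkn
  · have hempty : cuckooPr n m (fun ω => k ≤ (cuckooLargeEdges ω d).card) = 0 := by
      rw [cuckooPr_eq_card_filter_div, Finset.filter_false_of_mem fun ω _ =>
        not_le.2 ((card_finset_fin_le _).trans_lt hnk), Finset.card_empty, Nat.cast_zero, zero_div]
    rw [hempty]
    positivity
  · have hle : (k + d) / (d + 1) ≤ k := by
      rw [Nat.div_le_iff_le_mul_add_pred d.succ_pos, Nat.succ_sub_one]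
      exact Nat.add_le_add_right (Nat.le_mul_of_pos_left k d.succ_pos) d
    set r := (k + d) / (d + 1)
    rw [← Nat.add_sub_add_left k k r, ← two_mul]
    calc cuckooPr n m (fun ω => k ≤ (cuckooLargeEdges ω d).card)
        ≤ cuckooPr n m (fun ω => ∃ S : Finset (Fin n), S.card = k ∧
            (cuckooEndpoints ω S).card ≤ k + r) :=
          cuckooPr_mono fun ω hω => exists_card_eq_card_cuckooEndpoints_le hω
      _ ≤ n.choose k * ((2 * m).choose (k + r) * (((k + r : ℕ) : ℝ) / (2 * m)) ^ (2 * k)) :=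
          cuckooPr_exists_card_cuckooEndpoints_le hm k (by linarith)
      _ ≤ (Real.exp 3 * n) ^ k / (m : ℝ) ^ (2 * k - (k + r)) :=
          choose_mul_choose_mul_pow_le n hm (Nat.le_add_right k r) (by linarith)

lemma cuckooPr_lt_card_lt_cuckooC_le {s : ℝ} (hs : 0 ≤ s) :
    cuckooPr n m (fun ω => s < (Nat.card {v // d < cuckooC n m ω.1 ω.2 v} : ℝ)) ≤
      cuckooPr n m (fun ω => max (d + 1) ⌈s / 2⌉₊ ≤ (cuckooLargeEdges ω d).card) := by
  refine cuckooPr_mono fun ω hω => max_le ?_ (Nat.ceil_le.2 ?_)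
  · obtain ⟨⟨⟨v, hv⟩⟩, -⟩ := Nat.card_pos_iff.1 (Nat.cast_pos.1 (hs.trans_lt hω))
    exact lt_card_cuckooLargeEdges hv
  · have hcard : (Nat.card {v // d < cuckooC n m ω.1 ω.2 v} : ℝ) ≤
        2 * (cuckooLargeEdges ω d).card := mod_cast card_lt_cuckooC_le
    linarith

lemma cuckooPr_lt_card_lt_cuckooC_le_rpow {x s : ℝ} (hx : 1 ≤ x)
    (hn : Real.exp 3 * n ≤ x ^ (11 / 30 : ℝ)) (hm : x ^ (2 / 3 : ℝ) ≤ m) (hd : 3 ≤ d)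
    (hs : 0 ≤ s) :
    cuckooPr n m (fun ω => s < (Nat.card {v // d < cuckooC n m ω.1 ω.2 v} : ℝ)) ≤
      x ^ (-(1 / 60 * max 1 s)) := by
  have hm0 : 0 < m := Nat.cast_pos.1 ((Real.rpow_pos_of_pos (one_pos.trans_le hx) _).trans_le hm)
  have hnm : n ≤ m := by
    have hexp : (n : ℝ) ≤ Real.exp 3 * n :=
      le_mul_of_one_le_left n.cast_nonneg (Real.one_le_exp (by norm_num))
    have hxx : x ^ (11 / 30 : ℝ) ≤ x ^ (2 / 3 : ℝ) :=
      Real.rpow_le_rpow_of_exponent_le hx (by norm_num)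
    exact_mod_cast hexp.trans (hn.trans (hxx.trans hm))
  set k := max (d + 1) ⌈s / 2⌉₊
  have hdk : d + 1 ≤ k := le_max_left _ _
  have hsk : max 1 s ≤ 2 * k := by
    have hs2 : s / 2 ≤ k := Nat.ceil_le.1 (le_max_right _ _)
    have hk1 : (1 : ℝ) ≤ k := mod_cast (by omega : 1 ≤ k)
    exact max_le (by linarith) (by linarith)
  have hroots := five_mul_add_div_succ_le hd hdk
  calc cuckooPr n m (fun ω => s < (Nat.card {v // d < cuckooC n m ω.1 ω.2 v} : ℝ))
      ≤ cuckooPr n m (fun ω => k ≤ (cuckooLargeEdges ω d).card) :=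
        cuckooPr_lt_card_lt_cuckooC_le hs
    _ ≤ (Real.exp 3 * n) ^ k / (m : ℝ) ^ (k - (k + d) / (d + 1)) :=
        cuckooPr_le_card_cuckooLargeEdges_le hm0 hnm
    _ ≤ x ^ (-(k / 30) : ℝ) :=
        pow_div_pow_le_rpow_neg hx (by positivity) hn hm (by omega)
    _ ≤ x ^ (-(1 / 60 * max 1 s)) := Real.rpow_le_rpow_of_exponent_le hx (by linarith)

end TailBound

theorem inner_queue_bound_general :
    ∃ c : ℝ, 0 < c ∧ ∀ A : ℝ, ∀ᶠ x : ℝ in Filter.atTop, ∀ m n d : ℕ, ∀ s : ℝ,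
      x ^ (2 / 3 : ℝ) ≤ m → n ≤ A * x ^ (1 / 3 : ℝ) → 3 ≤ d → 0 ≤ s →
        cuckooPr n m (fun ω => s < (Nat.card {v // d < cuckooC n m ω.1 ω.2 v} : ℝ)) ≤
          x ^ (-(c * max 1 s)) := by
  refine ⟨1 / 60, by norm_num, fun A => ?_⟩
  filter_upwards [eventually_mul_rpow_third_le (Real.exp 3 * A), Filter.eventually_ge_atTop 1]
    with x hA hx m n d s hm hn hd hs
  refine cuckooPr_lt_card_lt_cuckooC_le_rpow hx ?_ hm hd hs
  calc Real.exp 3 * n ≤ Real.exp 3 * (A * x ^ (1 / 3 : ℝ)) := by gcongr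
    _ ≤ x ^ (11 / 30 : ℝ) := by rwa [← mul_assoc]

/-- Inner-queue bound: for the sparse inner cuckoo graph with `n' ≤ 2·m^{1/3}` edges on
parts of size `m' = ⌈m^{2/3}⌉`, for every real `0 < s ≤ m^{1/6}`, the probability that
more than `s` vertices lie in components with more than `8` edges is at most
`m^{−c·√s}`, for a universal constant `c > 0` and all large enough `m`. -/
theorem inner_queue_bound :
    ∃ c : ℝ, 0 < c ∧ ∃ m₀ : ℕ, ∀ m : ℕ, m₀ ≤ m →
      ∀ m' : ℕ, m' = ⌈(m : ℝ) ^ ((2 : ℝ) / 3)⌉₊ →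
      ∀ n' : ℕ, 0 < n' → (n' : ℝ) ≤ 2 * (m : ℝ) ^ ((1 : ℝ) / 3) →
      ∀ s : ℝ, 0 < s → s ≤ (m : ℝ) ^ ((1 : ℝ) / 6) →
        cuckooPr n' m' (fun ω =>
            s < (Nat.card {v : Fin m' ⊕ Fin m' // 8 < cuckooC n' m' ω.1 ω.2 v} : ℝ))
          ≤ (m : ℝ) ^ (-(c * Real.sqrt s)) := by
  obtain ⟨c, hc, hbound⟩ := inner_queue_bound_general
  obtain ⟨m₀, hm₀⟩ := Filter.eventually_atTop.1 <|
    tendsto_natCast_atTop_atTop.eventually ((hbound 2).and (Filter.eventually_ge_atTop 1))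
  refine ⟨c, hc, m₀, fun m hm m' hm' n' _ hn' s hs _ => ?_⟩
  obtain ⟨hm_bound, hm_one⟩ := hm₀ m hm
  refine (hm_bound m' n' 8 s (hm' ▸ Nat.le_ceil _) hn' (by norm_num) hs.le).trans ?_
  gcongr
  exact sqrt_le_max_one s
end

section
/- Fix a constant ε > 0. There exist constants c₂ > 0, c > 0 and a threshold n₀ (all depending only on ε) such that for all integers n ≥ n₀ and m with (1+ε)·n ≤ m, the random cuckoo graph with n edges on parts of size m satisfies: the probability that some vertex v has C(v) ≥ c₂·(log n)² is at most n^{−c·log n}. -/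
open Classical

/-!
Explore the component of a root edge `x₀` one vertex at a time. Given everything revealed so far,
the endpoints of the hidden edges are still independent and uniform on what has not been excluded,
so after fewer than `k` steps each hidden edge touches the next vertex with probability at most
`1 / (m - k)`. Hence `E z ^ #found` grows by a factor of at most `(1 + (z - 1) / (m - k)) ^ n` per
step, where `found` is the set of edges discovered. These edges are connected to each other, so if
the component has at least `k` edges, then at least `k - 1` of them are found within `k` steps: the
exploration has either exhausted the component, or visited `k` vertices of a connected graph.
Markov's inequality with `z` close to `m / n`, and a union bound over `x₀`, give a tail that is
exponential in `k`, with rate `log z - 1 + 1 / z > 0`; take `k` of order `(log n) ^ 2`.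
-/

namespace CuckooGraph

open Finset

section Reveal

variable {ι α : Type*} [DecidableEq α]

/-- The partial information about `f` obtained by learning, for every coordinate `x`, whether
`f x` lies in the region `D x`, and its value if so. -/
def reveal (D : ι → Finset α) (f : ι → α) (x : ι) : Option α :=
  Option.guard (· ∈ D x) (f x)

/-- The coordinates whose value is known to an observer of `reveal D f`. -/
def revealed [Fintype ι] (D : ι → Finset α) (f : ι → α) : Finset ι :=
  {x | f x ∈ D x}

lemma mem_revealed [Fintype ι] {D : ι → Finset α} {f : ι → α} {x : ι} :
    x ∈ revealed D f ↔ f x ∈ D x := by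
  simp [revealed]

lemma revealed_mono [Fintype ι] {D D' : ι → Finset α} (h : D ≤ D') (f : ι → α) :
    revealed D f ⊆ revealed D' f :=
  fun x hx ↦ mem_revealed.2 (h x (mem_revealed.1 hx))

lemma reveal_eq_some_iff {D : ι → Finset α} {f : ι → α} {x : ι} {a : α} :
    reveal D f x = some a ↔ f x = a ∧ f x ∈ D x := by
  simp [reveal]

lemma reveal_congr_of_le {D D' : ι → Finset α} (h : D ≤ D') {f f' : ι → α}
    (hf : reveal D' f' = reveal D' f) : reveal D f' = reveal D f := by
  have coarsen : ∀ f'' : ι → α, reveal D f'' = fun x ↦ (reveal D' f'' x).filter (· ∈ D x) := by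
    intro f''
    ext x a
    have := @h x (f'' x)
    simp only [Option.filter_eq_some_iff, reveal_eq_some_iff, decide_eq_true_eq]
    grind
  rw [coarsen f', coarsen f, hf]

variable [Fintype α]

lemma sum_guard_fiber_le {D D' : Finset α} (h : D ⊆ D') {p z : ℝ} (hp : 0 ≤ p) (hz : 1 ≤ z)
    (hcard : (#(D' \ D) : ℝ) ≤ p * #Dᶜ) (o : Option α) :
    ∑ a with Option.guard (· ∈ D) a = o, (if a ∈ D' then z else 1) ≤
      (1 + p * (z - 1)) * ∑ a with Option.guard (· ∈ D) a = o, (if a ∈ D then z else 1) := by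
  cases o with
  | some b =>
    have hsum : ∑ a with Option.guard (· ∈ D) a = some b, (if a ∈ D' then z else 1) =
        ∑ a with Option.guard (· ∈ D) a = some b, (if a ∈ D then z else 1) :=
      sum_congr rfl fun a ha ↦ by
        have haD : a ∈ D := by
          simpa using (Option.guard_eq_some_iff.1 (mem_filter.1 ha).2).2
        simp [haD, h haD]
    rw [hsum]
    refine le_mul_of_one_le_left (sum_nonneg fun a _ ↦ by split_ifs <;> linarith) ?_
    have := mul_nonneg hp (sub_nonneg.2 hz)
    linarith
  | none =>
    have hfiber : ({a | Option.guard (· ∈ D) a = none} : Finset α) = Dᶜ := by ext; simp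
    have hold : ∑ a ∈ Dᶜ, (if a ∈ D then z else 1) = (#Dᶜ : ℝ) := by
      rw [sum_congr rfl fun a ha ↦ if_neg (mem_compl.1 ha)]
      simp
    have hnew : ∑ a ∈ Dᶜ, (if a ∈ D' then z else 1) = #Dᶜ + #(D' \ D) * (z - 1) := by
      have hinter : ({a ∈ Dᶜ | a ∈ D'} : Finset α) = D' \ D := by ext; simp [and_comm]
      calc ∑ a ∈ Dᶜ, (if a ∈ D' then z else 1)
          = ∑ a ∈ Dᶜ, (1 + if a ∈ D' then z - 1 else 0) :=
            sum_congr rfl fun a _ ↦ by split_ifs <;> ring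
        _ = #Dᶜ + #(D' \ D) * (z - 1) := by
            rw [sum_add_distrib, ← sum_filter, hinter, sum_const, sum_const, nsmul_one,
              nsmul_eq_mul]
    rw [hfiber, hold, hnew]
    have := mul_le_mul_of_nonneg_right hcard (sub_nonneg.2 hz)
    linarith

variable [Fintype ι] [DecidableEq ι]

-- Given the information revealed on `D`, the coordinates stay independent: the fibre is a box.
lemma filter_reveal_eq_piFinset (D : ι → Finset α) (g : ι → Option α) :
    ({f | reveal D f = g} : Finset (ι → α)) =
      Fintype.piFinset fun x ↦ {a | Option.guard (· ∈ D x) a = g x} := by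
  ext f
  simp only [mem_filter_univ, Fintype.mem_piFinset, funext_iff, reveal]

lemma sum_pow_card_revealed_fiber (D D' : ι → Finset α) (g : ι → Option α) (z : ℝ) :
    ∑ f with reveal D f = g, z ^ #(revealed D' f) =
      ∏ x, ∑ a with Option.guard (· ∈ D x) a = g x, (if a ∈ D' x then z else 1) := by
  simp only [prod_univ_sum, ← filter_reveal_eq_piFinset, ← prod_filter, prod_const, revealed]

lemma sum_pow_card_revealed_fiber_le {D D' : ι → Finset α} (h : D ≤ D') {p z : ℝ} (hp : 0 ≤ p)
    (hz : 1 ≤ z) (hcard : ∀ x, (#(D' x \ D x) : ℝ) ≤ p * #(D x)ᶜ) (g : ι → Option α) :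
    ∑ f with reveal D f = g, z ^ #(revealed D' f) ≤
      (1 + p * (z - 1)) ^ Fintype.card ι * ∑ f with reveal D f = g, z ^ #(revealed D f) := by
  rw [sum_pow_card_revealed_fiber, sum_pow_card_revealed_fiber, ← card_univ, ← prod_const,
    ← prod_mul_distrib]
  exact prod_le_prod (fun x _ ↦ sum_nonneg fun a _ ↦ by split_ifs <;> linarith)
    fun x _ ↦ sum_guard_fiber_le (h x) hp hz (hcard x) (g x)

end Reveal

lemma sum_le_sum_of_fiberwise {β γ : Type*} [Fintype β] [DecidableEq γ] (r : β → γ) {F G : β → ℝ}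
    (h : ∀ b₀, ∑ b with r b = r b₀, F b ≤ ∑ b with r b = r b₀, G b) :
    ∑ b, F b ≤ ∑ b, G b := by
  have hr : ∀ b ∈ univ, r b ∈ univ.image r := fun b hb ↦ mem_image_of_mem r hb
  rw [← sum_fiberwise_of_maps_to hr, ← sum_fiberwise_of_maps_to hr]
  refine sum_le_sum fun c hc ↦ ?_
  obtain ⟨b₀, -, rfl⟩ := mem_image.1 hc
  exact h b₀

section Region

variable {ι α V : Type*} [DecidableEq V] [Fintype α] (e : α → Sym2 V)

/-- The values of an edge that are incident to the vertex set `W`. -/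
def touching (W : Finset V) : Finset α :=
  {a | ∃ v ∈ W, v ∈ e a}

/-- The values revealed by exploring the vertex set `W` from the root edge `x₀`: those touching
`W`, and every value of the root edge. -/
def region [DecidableEq ι] (x₀ : ι) (W : Finset V) (x : ι) : Finset α :=
  if x = x₀ then univ else touching e W

variable {e} {W W' : Finset V}

lemma touching_mono (h : W ⊆ W') : touching e W ⊆ touching e W' :=
  monotone_filter_right _ fun _ _ ⟨v, hv, hva⟩ ↦ ⟨v, h hv, hva⟩

lemma region_mono [DecidableEq ι] {x₀ : ι} (h : W ⊆ W') : region e x₀ W ≤ region e x₀ W' := by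
  intro x
  unfold region
  split_ifs
  exacts [le_rfl, touching_mono h]

lemma card_region_insert_sdiff_le [DecidableEq ι] [DecidableEq α] {x₀ : ι} {p : ℝ} {v : V}
    (hW : (#(touching e (insert v W) \ touching e W) : ℝ) ≤ p * #(touching e W)ᶜ) (x : ι) :
    (#(region e x₀ (insert v W) x \ region e x₀ W x) : ℝ) ≤ p * #(region e x₀ W x)ᶜ := by
  unfold region
  split_ifs
  · simp
  · exact hW

end Region

section Exploration

variable {ι α V : Type*} [DecidableEq V] (e : α → Sym2 V)

/-- The endpoints of the edges recorded in the partial information `g`. -/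
def endpoints [Fintype ι] (g : ι → Option α) : Finset V :=
  univ.biUnion fun x ↦ (g x).elim ∅ fun a ↦ (e a).toFinset

/-- Adds to `W` one endpoint of an edge recorded in `g`, if `W` misses one. The new vertex
depends on `W` and `g` only, so an exploration built from `extend` never uses hidden edges. -/
noncomputable def extend [Fintype ι] (g : ι → Option α) (W : Finset V) : Finset V :=
  if h : (endpoints e g \ W).Nonempty then insert h.choose W else W

lemma extend_cases [Fintype ι] (g : ι → Option α) (W : Finset V) :
    (∃ v ∈ endpoints e g \ W, extend e g W = insert v W) ∨
      endpoints e g ⊆ W ∧ extend e g W = W := by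
  by_cases h : (endpoints e g \ W).Nonempty
  · exact .inl ⟨h.choose, h.choose_spec, by simp [extend, h]⟩
  · exact .inr ⟨sdiff_eq_empty_iff_subset.1 (not_nonempty_iff_eq_empty.1 h), by simp [extend, h]⟩

lemma endpoints_reveal [Fintype ι] [DecidableEq α] (D : ι → Finset α) (f : ι → α) :
    endpoints e (reveal D f) = (revealed D f).biUnion fun x ↦ (e (f x)).toFinset := by
  ext u
  simp only [endpoints, mem_biUnion, mem_univ, true_and, mem_revealed]
  refine exists_congr fun x ↦ ?_
  by_cases hx : f x ∈ D x <;> simp [reveal, Option.guard_apply, hx]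

variable [Fintype ι] [DecidableEq ι] [Fintype α] [DecidableEq α] (x₀ : ι)

/-- The edges of the random multigraph with edge set `ι` and values `f` found by exploring `W`. -/
def foundEdges (f : ι → α) (W : Finset V) : Finset ι :=
  revealed (region e x₀ W) f

/-- The endpoints of the edges found by exploring `W`. -/
def foundVertices (f : ι → α) (W : Finset V) : Finset V :=
  endpoints e (reveal (region e x₀ W) f)

/-- The vertices explored after the given number of steps, starting from the edge `x₀`. -/
noncomputable def explore (f : ι → α) : ℕ → Finset V
  | 0 => ∅
  | j + 1 => extend e (reveal (region e x₀ (explore f j)) f) (explore f j)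

variable {e x₀} {f : ι → α} {W W' : Finset V}

lemma mem_foundEdges {x : ι} : x ∈ foundEdges e x₀ f W ↔ x = x₀ ∨ ∃ v ∈ W, v ∈ e (f x) := by
  by_cases hx : x = x₀ <;> simp [foundEdges, mem_revealed, region, touching, hx]

lemma foundVertices_eq_biUnion :
    foundVertices e x₀ f W = (foundEdges e x₀ f W).biUnion fun x ↦ (e (f x)).toFinset :=
  endpoints_reveal e _ f

lemma mem_foundVertices {u : V} :
    u ∈ foundVertices e x₀ f W ↔ ∃ x ∈ foundEdges e x₀ f W, u ∈ e (f x) := by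
  simp [foundVertices_eq_biUnion]

lemma foundEdges_mono (h : W ⊆ W') : foundEdges e x₀ f W ⊆ foundEdges e x₀ f W' :=
  revealed_mono (region_mono h) f

lemma foundVertices_mono (h : W ⊆ W') : foundVertices e x₀ f W ⊆ foundVertices e x₀ f W' := by
  simp only [foundVertices_eq_biUnion]
  exact biUnion_subset_biUnion_of_subset_left _ (foundEdges_mono h)

lemma foundEdges_empty : foundEdges e x₀ f ∅ = {x₀} := by
  ext x
  simp [mem_foundEdges]

lemma card_toFinset_erase_le_one {s : Sym2 V} {v : V} (hv : v ∈ s) : #(s.toFinset.erase v) ≤ 1 := by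
  rw [card_erase_of_mem (Sym2.mem_toFinset.2 hv), Sym2.card_toFinset]
  split_ifs <;> simp

lemma card_foundVertices_insert_le {v : V} (hv : v ∈ foundVertices e x₀ f W) :
    #(foundVertices e x₀ f (insert v W)) + #(foundEdges e x₀ f W) ≤
      #(foundVertices e x₀ f W) + #(foundEdges e x₀ f (insert v W)) := by
  set new := foundEdges e x₀ f (insert v W) \ foundEdges e x₀ f W with hnew
  have touches_v : ∀ x ∈ new, v ∈ e (f x) := by
    simp only [hnew, mem_sdiff, mem_foundEdges, mem_insert]
    grind
  have hsub : foundVertices e x₀ f (insert v W) ⊆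
      foundVertices e x₀ f W ∪ new.biUnion fun x ↦ (e (f x)).toFinset.erase v := by
    intro u hu
    obtain ⟨x, hx, hux⟩ := mem_foundVertices.1 hu
    by_cases hxW : x ∈ foundEdges e x₀ f W
    · exact mem_union_left _ (mem_foundVertices.2 ⟨x, hxW, hux⟩)
    by_cases huv : u = v
    · exact mem_union_left _ (huv ▸ hv)
    · exact mem_union_right _ (mem_biUnion.2
        ⟨x, mem_sdiff.2 ⟨hx, hxW⟩, mem_erase.2 ⟨huv, Sym2.mem_toFinset.2 hux⟩⟩)
  have hnewV : #(new.biUnion fun x ↦ (e (f x)).toFinset.erase v) ≤ #new * 1 :=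
    card_biUnion_le_card_mul _ _ _ fun x hx ↦ card_toFinset_erase_le_one (touches_v x hx)
  have hnewE : #new + #(foundEdges e x₀ f W) = #(foundEdges e x₀ f (insert v W)) :=
    card_sdiff_add_card_eq_card (foundEdges_mono (subset_insert v W))
  have := (card_le_card hsub).trans (card_union_le _ _)
  omega

lemma explore_succ_cases (f : ι → α) (j : ℕ) :
    (∃ v ∈ foundVertices e x₀ f (explore e x₀ f j) \ explore e x₀ f j,
        explore e x₀ f (j + 1) = insert v (explore e x₀ f j)) ∨
      foundVertices e x₀ f (explore e x₀ f j) ⊆ explore e x₀ f j ∧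
        explore e x₀ f (j + 1) = explore e x₀ f j :=
  extend_cases e _ _

lemma explore_subset_succ (f : ι → α) (j : ℕ) : explore e x₀ f j ⊆ explore e x₀ f (j + 1) := by
  obtain ⟨v, -, h⟩ | ⟨-, h⟩ := explore_succ_cases (e := e) (x₀ := x₀) f j <;> simp [h]

lemma card_explore_le (f : ι → α) (j : ℕ) : #(explore e x₀ f j) ≤ j := by
  induction j with
  | zero => simp [explore]
  | succ j ih =>
    obtain ⟨v, -, h⟩ | ⟨-, h⟩ := explore_succ_cases (e := e) (x₀ := x₀) f j <;> rw [h]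
    · exact (card_insert_le _ _).trans (by omega)
    · omega

lemma explore_subset_foundVertices (f : ι → α) (j : ℕ) :
    explore e x₀ f j ⊆ foundVertices e x₀ f (explore e x₀ f j) := by
  induction j with
  | zero => simp [explore]
  | succ j ih =>
    obtain ⟨v, hv, h⟩ | ⟨-, h⟩ := explore_succ_cases (e := e) (x₀ := x₀) f j
    · have hins := insert_subset (mem_sdiff.1 hv).1 ih
      rw [← h] at hins
      exact hins.trans (foundVertices_mono (explore_subset_succ f j))
    · rwa [h]

-- The found edges form a connected multigraph, so they span at most one more vertex than edges.
lemma card_foundVertices_explore_le (f : ι → α) (j : ℕ) :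
    #(foundVertices e x₀ f (explore e x₀ f j)) ≤ #(foundEdges e x₀ f (explore e x₀ f j)) + 1 := by
  induction j with
  | zero =>
    simp only [explore, foundVertices_eq_biUnion, foundEdges_empty, singleton_biUnion,
      card_singleton, Sym2.card_toFinset]
    split_ifs <;> simp
  | succ j ih =>
    obtain ⟨v, hv, h⟩ | ⟨-, h⟩ := explore_succ_cases (e := e) (x₀ := x₀) f j <;> rw [h]
    · have := card_foundVertices_insert_le (mem_sdiff.1 hv).1
      omega
    · exact ih

lemma card_explore_eq_or_foundVertices_subset (f : ι → α) (j : ℕ) :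
    #(explore e x₀ f j) = j ∨ foundVertices e x₀ f (explore e x₀ f j) ⊆ explore e x₀ f j := by
  induction j with
  | zero => simp [explore]
  | succ j ih =>
    obtain ⟨v, hv, h⟩ | ⟨hclosed, h⟩ := explore_succ_cases (e := e) (x₀ := x₀) f j <;> rw [h]
    · obtain ⟨hv, hvW⟩ := mem_sdiff.1 hv
      exact .inl (by rw [card_insert_of_notMem hvW, ih.resolve_right fun hc ↦ hvW (hc hv)])
    · exact .inr hclosed

lemma le_card_foundEdges_or_foundVertices_subset (f : ι → α) (j : ℕ) :
    j ≤ #(foundEdges e x₀ f (explore e x₀ f j)) + 1 ∨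
      foundVertices e x₀ f (explore e x₀ f j) ⊆ explore e x₀ f j := by
  refine (card_explore_eq_or_foundVertices_subset f j).imp_left fun hj ↦ ?_
  calc j = #(explore e x₀ f j) := hj.symm
    _ ≤ #(foundVertices e x₀ f (explore e x₀ f j)) :=
      card_le_card (explore_subset_foundVertices f j)
    _ ≤ _ := card_foundVertices_explore_le f j

lemma explore_congr {f f' : ι → α} {j : ℕ}
    (h : reveal (region e x₀ (explore e x₀ f j)) f' = reveal (region e x₀ (explore e x₀ f j)) f) :
    explore e x₀ f' j = explore e x₀ f j := by
  induction j with
  | zero => rfl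
  | succ j ih =>
    have hj := reveal_congr_of_le (region_mono (explore_subset_succ f j)) h
    simp only [explore, ih hj, hj]

variable {p z : ℝ} {k : ℕ}

lemma sum_pow_card_foundEdges_extend_le (hp : 0 ≤ p) (hz : 1 ≤ z)
    (hW : ∀ v, (#(touching e (insert v W) \ touching e W) : ℝ) ≤ p * #(touching e W)ᶜ)
    (g : ι → Option α) :
    ∑ f with reveal (region e x₀ W) f = g, z ^ #(foundEdges e x₀ f (extend e g W)) ≤
      (1 + p * (z - 1)) ^ Fintype.card ι *
        ∑ f with reveal (region e x₀ W) f = g, z ^ #(foundEdges e x₀ f W) := by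
  obtain ⟨v, -, h⟩ | ⟨-, h⟩ := extend_cases e g W <;> rw [h]
  · exact sum_pow_card_revealed_fiber_le (region_mono (subset_insert v W)) hp hz
      (card_region_insert_sdiff_le (hW v)) g
  · refine le_mul_of_one_le_left (sum_nonneg fun f _ ↦ by positivity) (one_le_pow₀ ?_)
    have := mul_nonneg hp (sub_nonneg.2 hz)
    linarith

lemma sum_pow_card_foundEdges_explore_succ_le (hp : 0 ≤ p) (hz : 1 ≤ z) {j : ℕ}
    (hspread : ∀ (W : Finset V) (v : V), #W ≤ j →
      (#(touching e (insert v W) \ touching e W) : ℝ) ≤ p * #(touching e W)ᶜ) :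
    ∑ f : ι → α, z ^ #(foundEdges e x₀ f (explore e x₀ f (j + 1))) ≤
      (1 + p * (z - 1)) ^ Fintype.card ι *
        ∑ f : ι → α, z ^ #(foundEdges e x₀ f (explore e x₀ f j)) := by
  rw [mul_sum]
  let state : (ι → α) → Finset V × (ι → Option α) := fun f ↦
    (explore e x₀ f j, reveal (region e x₀ (explore e x₀ f j)) f)
  refine sum_le_sum_of_fiberwise state fun f₀ ↦ ?_
  set W := explore e x₀ f₀ j
  set g := reveal (region e x₀ W) f₀
  have hstate : ∀ f, state f = state f₀ ↔ reveal (region e x₀ W) f = g := fun f ↦ by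
    constructor
    · intro h
      obtain ⟨hW, hg⟩ := Prod.mk.inj h
      rwa [hW] at hg
    · intro h
      have hW : explore e x₀ f j = W := explore_congr h
      simp only [state, hW, h, W, g]
  simp only [hstate, ← mul_sum]
  have hnow : ∀ f ∈ univ.filter fun f ↦ reveal (region e x₀ W) f = g, explore e x₀ f j = W :=
    fun f hf ↦ explore_congr (mem_filter.1 hf).2
  have hnext : ∀ f ∈ univ.filter fun f ↦ reveal (region e x₀ W) f = g,
      explore e x₀ f (j + 1) = extend e g W :=
    fun f hf ↦ by rw [explore, hnow f hf, (mem_filter.1 hf).2]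
  rw [sum_congr rfl fun f hf ↦ congrArg (fun U ↦ z ^ #(foundEdges e x₀ f U)) (hnext f hf),
    sum_congr rfl fun f hf ↦ congrArg (fun U ↦ z ^ #(foundEdges e x₀ f U)) (hnow f hf)]
  exact sum_pow_card_foundEdges_extend_le hp hz (fun v ↦ hspread W v (card_explore_le f₀ j)) g

theorem sum_pow_card_foundEdges_explore_le (hp : 0 ≤ p) (hz : 1 ≤ z)
    (hspread : ∀ (W : Finset V) (v : V), #W < k →
      (#(touching e (insert v W) \ touching e W) : ℝ) ≤ p * #(touching e W)ᶜ) :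
    ∑ f : ι → α, z ^ #(foundEdges e x₀ f (explore e x₀ f k)) ≤
      (1 + p * (z - 1)) ^ (Fintype.card ι * k) * (z * Fintype.card (ι → α)) := by
  induction k with
  | zero => simp [explore, foundEdges_empty, mul_comm]
  | succ j ih =>
    have : 0 ≤ 1 + p * (z - 1) := by
      have := mul_nonneg hp (sub_nonneg.2 hz)
      linarith
    calc ∑ f : ι → α, z ^ #(foundEdges e x₀ f (explore e x₀ f (j + 1)))
        ≤ (1 + p * (z - 1)) ^ Fintype.card ι *
            ∑ f : ι → α, z ^ #(foundEdges e x₀ f (explore e x₀ f j)) :=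
          sum_pow_card_foundEdges_explore_succ_le hp hz fun W v hW ↦ hspread W v (by omega)
      _ ≤ (1 + p * (z - 1)) ^ Fintype.card ι *
            ((1 + p * (z - 1)) ^ (Fintype.card ι * j) * (z * Fintype.card (ι → α))) := by
          gcongr
          exact ih fun W v hW ↦ hspread W v (by omega)
      _ = (1 + p * (z - 1)) ^ (Fintype.card ι * (j + 1)) * (z * Fintype.card (ι → α)) := by ring

theorem card_le_card_foundEdges_explore_mul_pow_le (hp : 0 ≤ p) (hz : 1 ≤ z)
    (hspread : ∀ (W : Finset V) (v : V), #W < k →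
      (#(touching e (insert v W) \ touching e W) : ℝ) ≤ p * #(touching e W)ᶜ) :
    #{f : ι → α | k ≤ #(foundEdges e x₀ f (explore e x₀ f k)) + 1} * z ^ k ≤
      z ^ 2 * (1 + p * (z - 1)) ^ (Fintype.card ι * k) * Fintype.card (ι → α) := by
  have : 0 ≤ z := by linarith
  calc #{f : ι → α | k ≤ #(foundEdges e x₀ f (explore e x₀ f k)) + 1} * z ^ k
      = ∑ f : ι → α with k ≤ #(foundEdges e x₀ f (explore e x₀ f k)) + 1, z ^ k := by simp
    _ ≤ ∑ f : ι → α with k ≤ #(foundEdges e x₀ f (explore e x₀ f k)) + 1,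
          z * z ^ #(foundEdges e x₀ f (explore e x₀ f k)) :=
        sum_le_sum fun f hf ↦ by
          rw [← pow_succ']
          exact pow_le_pow_right₀ hz (mem_filter.1 hf).2
    _ ≤ ∑ f : ι → α, z * z ^ #(foundEdges e x₀ f (explore e x₀ f k)) :=
        sum_le_sum_of_subset_of_nonneg (filter_subset _ _) fun f _ _ ↦ by positivity
    _ = z * ∑ f : ι → α, z ^ #(foundEdges e x₀ f (explore e x₀ f k)) := (mul_sum ..).symm
    _ ≤ z * ((1 + p * (z - 1)) ^ (Fintype.card ι * k) * (z * Fintype.card (ι → α))) := by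
        gcongr
        exact sum_pow_card_foundEdges_explore_le hp hz hspread
    _ = _ := by ring

end Exploration

section Bipartite

variable {β γ : Type*}

/-- The edge of a bipartite graph with the given left and right endpoints. -/
def bipartiteEdge (a : β × γ) : Sym2 (β ⊕ γ) :=
  s(.inl a.1, .inr a.2)

variable [Fintype β] [DecidableEq β]

lemma compl_touching_bipartiteEdge [Fintype γ] [DecidableEq γ] (W : Finset (β ⊕ γ)) :
    (touching bipartiteEdge W)ᶜ = W.toLeftᶜ ×ˢ W.toRightᶜ := by
  ext a
  simp [touching, bipartiteEdge]

lemma card_touching_bipartiteEdge_insert_sdiff_le (W : Finset (β ⊕ β)) (v : β ⊕ β) :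
    (Fintype.card β - #W : ℝ) * #(touching bipartiteEdge (insert v W) \ touching bipartiteEdge W) ≤
      #(touching bipartiteEdge W)ᶜ := by
  have hL : (Fintype.card β - #W : ℝ) ≤ #W.toLeftᶜ := by
    rw [card_compl, Nat.cast_sub (card_le_univ _)]
    gcongr
    exact card_toLeft_le
  have hR : (Fintype.card β - #W : ℝ) ≤ #W.toRightᶜ := by
    rw [card_compl, Nat.cast_sub (card_le_univ _)]
    gcongr
    exact card_toRight_le
  rw [compl_touching_bipartiteEdge, card_product, Nat.cast_mul]
  cases v with
  | inl i =>
    have hsub : touching bipartiteEdge (insert (.inl i) W) \ touching bipartiteEdge W ⊆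
        {i} ×ˢ W.toRightᶜ := by
      intro a
      simp only [mem_sdiff, touching, mem_filter_univ, bipartiteEdge, Sym2.mem_iff, mem_insert,
        mem_product, mem_singleton, mem_compl, mem_toRight]
      grind
    have hcard := card_le_card hsub
    rw [card_product, card_singleton, one_mul] at hcard
    gcongr
  | inr i =>
    have hsub : touching bipartiteEdge (insert (.inr i) W) \ touching bipartiteEdge W ⊆
        W.toLeftᶜ ×ˢ {i} := by
      intro a
      simp only [mem_sdiff, touching, mem_filter_univ, bipartiteEdge, Sym2.mem_iff, mem_insert,
        mem_product, mem_singleton, mem_compl, mem_toLeft]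
      grind
    have hcard := card_le_card hsub
    rw [card_product, card_singleton, mul_one] at hcard
    rw [mul_comm (#W.toLeftᶜ : ℝ)]
    gcongr

end Bipartite

section Cuckoo

variable {n m k : ℕ} {h₀ h₁ : Fin n → Fin m} {x₀ : Fin n} {v : Fin m ⊕ Fin m}
  {W : Finset (Fin m ⊕ Fin m)}

lemma mem_iff_mem_of_cuckooConn
    (hW : foundVertices bipartiteEdge x₀ (fun x ↦ (h₀ x, h₁ x)) W ⊆ W) {u : Fin m ⊕ Fin m}
    (huv : cuckooConn n m h₀ h₁ u v) : u ∈ W ↔ v ∈ W := by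
  have closed : ∀ {x w w'}, w ∈ bipartiteEdge (h₀ x, h₁ x) → w' ∈ bipartiteEdge (h₀ x, h₁ x) →
      w ∈ W → w' ∈ W := fun hw hw' hwW ↦
    hW (mem_foundVertices.2 ⟨_, mem_foundEdges.2 (.inr ⟨_, hwW, hw⟩), hw'⟩)
  induction huv with
  | rel u v h =>
    obtain ⟨x, rfl, rfl⟩ := h
    exact ⟨closed (Sym2.mem_mk_left _ _) (Sym2.mem_mk_right _ _),
      closed (Sym2.mem_mk_right _ _) (Sym2.mem_mk_left _ _)⟩
  | refl => rfl
  | symm _ _ _ ih => exact ih.symm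
  | trans _ _ _ _ _ ih ih' => exact ih.trans ih'

lemma cuckooC_le_card_foundEdges
    (hW : foundVertices bipartiteEdge x₀ (fun x ↦ (h₀ x, h₁ x)) W ⊆ W)
    (hv : cuckooConn n m h₀ h₁ (.inl (h₀ x₀)) v) :
    cuckooC n m h₀ h₁ v ≤ #(foundEdges bipartiteEdge x₀ (fun x ↦ (h₀ x, h₁ x)) W) := by
  have hx₀ : Sum.inl (h₀ x₀) ∈ W :=
    hW (mem_foundVertices.2 ⟨x₀, mem_foundEdges.2 (.inl rfl), Sym2.mem_mk_left _ _⟩)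
  have hvW : v ∈ W := (mem_iff_mem_of_cuckooConn hW hv).1 hx₀
  rw [cuckooC, Nat.card_eq_fintype_card, Fintype.card_subtype]
  refine card_le_card fun x hx ↦ mem_foundEdges.2 (.inr ⟨.inl (h₀ x), ?_, Sym2.mem_mk_left _ _⟩)
  exact (mem_iff_mem_of_cuckooConn hW (mem_filter.1 hx).2).2 hvW

lemma le_card_foundEdges_explore_of_le_cuckooC (hv : cuckooConn n m h₀ h₁ (.inl (h₀ x₀)) v)
    (hk : k ≤ cuckooC n m h₀ h₁ v) :
    k ≤ #(foundEdges bipartiteEdge x₀ (fun x ↦ (h₀ x, h₁ x))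
      (explore bipartiteEdge x₀ (fun x ↦ (h₀ x, h₁ x)) k)) + 1 := by
  obtain h | hclosed := le_card_foundEdges_or_foundVertices_subset (e := bipartiteEdge) (x₀ := x₀)
    (fun x ↦ (h₀ x, h₁ x)) k
  · exact h
  · exact (hk.trans (cuckooC_le_card_foundEdges hclosed hv)).trans (Nat.le_succ _)

lemma cuckooPr_eq_card_div (E : HashPair n m → Prop) [DecidablePred E] :
    cuckooPr n m E = (#{f : Fin n → Fin m × Fin m | E (fun x ↦ (f x).1, fun x ↦ (f x).2)} : ℝ) /
      Fintype.card (Fin n → Fin m × Fin m) := by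
  let split := Equiv.arrowProdEquivProdArrow (Fin n) (fun _ ↦ Fin m) (fun _ ↦ Fin m)
  have hE : Nat.card {ω // E ω} =
      #{f : Fin n → Fin m × Fin m | E (fun x ↦ (f x).1, fun x ↦ (f x).2)} := by
    rw [← Fintype.card_subtype, ← Nat.card_eq_fintype_card]
    exact (Nat.card_congr (split.subtypeEquiv fun _ ↦ Iff.rfl)).symm
  have hΩ : Nat.card (HashPair n m) = Fintype.card (Fin n → Fin m × Fin m) :=
    (Nat.card_congr split).symm.trans Nat.card_eq_fintype_card
  rw [cuckooPr, hE, hΩ]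

lemma card_exists_le_cuckooC_le_sum (hk : 0 < k) :
    #{f : Fin n → Fin m × Fin m | ∃ v, k ≤ cuckooC n m (fun x ↦ (f x).1) (fun x ↦ (f x).2) v} ≤
      ∑ x₀, #{f : Fin n → Fin m × Fin m |
        k ≤ #(foundEdges bipartiteEdge x₀ f (explore bipartiteEdge x₀ f k)) + 1} := by
  refine (card_le_card fun f hf ↦ ?_).trans card_biUnion_le
  obtain ⟨v, hv⟩ := (mem_filter.1 hf).2
  obtain ⟨⟨x₀, hx₀⟩⟩ := (Nat.card_pos_iff.1 (hk.trans_le hv)).1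
  exact mem_biUnion.2 ⟨x₀, mem_univ _, mem_filter.2
    ⟨mem_univ _, le_card_foundEdges_explore_of_le_cuckooC hx₀ hv⟩⟩

theorem cuckooPr_exists_le_cuckooC_le (hk₀ : 0 < k) (hkm : k < m) {z : ℝ} (hz : 1 ≤ z) :
    cuckooPr n m (fun ω ↦ ∃ v, k ≤ cuckooC n m ω.1 ω.2 v) ≤
      n * (z ^ 2 * (1 + (m - k : ℝ)⁻¹ * (z - 1)) ^ (n * k) / z ^ k) := by
  have hmk : (0 : ℝ) < m - k := sub_pos.2 (Nat.cast_lt.2 hkm)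
  have hspread : ∀ (W : Finset (Fin m ⊕ Fin m)) (v : Fin m ⊕ Fin m), #W < k →
      (#(touching bipartiteEdge (insert v W) \ touching bipartiteEdge W) : ℝ) ≤
        (m - k : ℝ)⁻¹ * #(touching bipartiteEdge W)ᶜ := fun W v hW ↦ by
    rw [le_inv_mul_iff₀ hmk]
    refine le_trans ?_ (card_touching_bipartiteEdge_insert_sdiff_le W v)
    rw [Fintype.card_fin]
    gcongr
  have hedge : ∀ x₀ : Fin n, (#{f : Fin n → Fin m × Fin m |
      k ≤ #(foundEdges bipartiteEdge x₀ f (explore bipartiteEdge x₀ f k)) + 1} : ℝ) ≤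
        z ^ 2 * (1 + (m - k : ℝ)⁻¹ * (z - 1)) ^ (n * k) / z ^ k *
          Fintype.card (Fin n → Fin m × Fin m) := fun x₀ ↦ by
    have := card_le_card_foundEdges_explore_mul_pow_le (x₀ := x₀) (inv_nonneg.2 hmk.le) hz hspread
    rw [Fintype.card_fin] at this
    rwa [div_mul_eq_mul_div, le_div_iff₀ (by positivity)]
  have : NeZero m := ⟨(hk₀.trans hkm).ne'⟩
  have hΩ : (0 : ℝ) < Fintype.card (Fin n → Fin m × Fin m) := Nat.cast_pos.2 Fintype.card_pos
  rw [cuckooPr_eq_card_div, div_le_iff₀ hΩ]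
  calc (#{f : Fin n → Fin m × Fin m |
        ∃ v, k ≤ cuckooC n m (fun x ↦ (f x).1) (fun x ↦ (f x).2) v} : ℝ)
      ≤ ∑ x₀, (#{f : Fin n → Fin m × Fin m |
          k ≤ #(foundEdges bipartiteEdge x₀ f (explore bipartiteEdge x₀ f k)) + 1} : ℝ) :=
        mod_cast card_exists_le_cuckooC_le_sum hk₀
    _ ≤ ∑ _x₀ : Fin n, z ^ 2 * (1 + (m - k : ℝ)⁻¹ * (z - 1)) ^ (n * k) / z ^ k *
          Fintype.card (Fin n → Fin m × Fin m) := sum_le_sum fun x₀ _ ↦ hedge x₀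
    _ = n * (z ^ 2 * (1 + (m - k : ℝ)⁻¹ * (z - 1)) ^ (n * k) / z ^ k) *
          Fintype.card (Fin n → Fin m × Fin m) := by
        rw [sum_const, card_univ, Fintype.card_fin, nsmul_eq_mul, mul_assoc]

end Cuckoo

section Asymptotics

open Real Filter

/-- The large deviation rate at `1` of a Poisson variable of mean `a⁻¹`, the limiting number of
edges at a vertex when `m = a * n`. It is the exponential decay rate of component sizes. -/
noncomputable def decayRate (a : ℝ) : ℝ :=
  log a - (1 - a⁻¹)

lemma decayRate_pos {a : ℝ} (ha : 1 < a) : 0 < decayRate a := by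
  have := log_lt_sub_one_of_pos (inv_pos.2 (zero_lt_one.trans ha)) (inv_lt_one_of_one_lt₀ ha).ne
  rw [log_inv] at this
  rw [decayRate]
  linarith

-- The parameter `z = a` minimises the bound `cuckooPr_exists_le_cuckooC_le` asymptotically.
theorem cuckooPr_exists_le_cuckooC_le_exp {n m k : ℕ} (hk₀ : 0 < k) (hkm : k < m) {a : ℝ}
    (ha : 1 ≤ a) (hm : a * n ≤ m - k) :
    cuckooPr n m (fun ω ↦ ∃ v, k ≤ cuckooC n m ω.1 ω.2 v) ≤
      n * (a ^ 2 * exp (-(decayRate a * k))) := by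
  have ha₀ : 0 < a := by linarith
  have hmk : (0 : ℝ) < m - k := sub_pos.2 (Nat.cast_lt.2 hkm)
  have hgrowth : (1 + (m - k : ℝ)⁻¹ * (a - 1)) ^ (n * k) ≤ exp ((1 - a⁻¹) * k) := by
    have : 0 ≤ (m - k : ℝ)⁻¹ * (a - 1) := mul_nonneg (inv_nonneg.2 hmk.le) (sub_nonneg.2 ha)
    calc (1 + (m - k : ℝ)⁻¹ * (a - 1)) ^ (n * k)
        ≤ exp ((m - k : ℝ)⁻¹ * (a - 1)) ^ (n * k) := by
          gcongr
          rw [add_comm]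
          exact add_one_le_exp _
      _ = exp (n * (m - k : ℝ)⁻¹ * (a - 1) * k) := by
          rw [← exp_nat_mul]
          push_cast
          ring_nf
      _ ≤ exp (a⁻¹ * (a - 1) * k) := by
          have : n * (m - k : ℝ)⁻¹ ≤ a⁻¹ := by
            rw [← div_eq_mul_inv, div_le_iff₀ hmk, le_inv_mul_iff₀ ha₀]
            exact hm
          have : 0 ≤ a - 1 := sub_nonneg.2 ha
          gcongr
      _ = exp ((1 - a⁻¹) * k) := by rw [mul_sub_one, inv_mul_cancel₀ ha₀.ne']
  have hpow : a ^ k = exp (log a * k) := by rw [mul_comm, exp_nat_mul, exp_log ha₀]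
  refine (cuckooPr_exists_le_cuckooC_le hk₀ hkm ha).trans ?_
  calc n * (a ^ 2 * (1 + (m - k : ℝ)⁻¹ * (a - 1)) ^ (n * k) / a ^ k)
      ≤ n * (a ^ 2 * exp ((1 - a⁻¹) * k) / a ^ k) := by gcongr
    _ = n * (a ^ 2 * exp (-(decayRate a * k))) := by
        rw [hpow, mul_div_assoc, ← exp_sub, decayRate]
        ring_nf

lemma eventually_const_mul_log_sq_add_one_le (C : ℝ) {δ : ℝ} (hδ : 0 < δ) :
    ∀ᶠ n : ℕ in atTop, C * log n ^ 2 + 1 ≤ δ * n := by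
  have hlog : (fun x : ℝ ↦ C * log x ^ 2) =o[atTop] fun x ↦ x :=
    isLittleO_pow_log_id_atTop.const_mul_left C
  have hone : (fun _ : ℝ ↦ (1 : ℝ)) =o[atTop] fun x ↦ x := Asymptotics.isLittleO_const_id_atTop 1
  filter_upwards [tendsto_natCast_atTop_atTop.eventually ((hlog.add hone).def hδ)] with n hn
  rw [Real.norm_natCast] at hn
  exact (le_abs_self _).trans hn

lemma mul_exp_le_rpow_neg_log {x b η k : ℝ} (hη : 0 < η) (hbx : b ≤ x) (hlog : 2 ≤ log x)
    (hx : 0 < x) (hk : 2 / η * log x ^ 2 ≤ k) :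
    x * (b * exp (-(η * k))) ≤ x ^ (-log x) := by
  have hηk : 2 * log x ^ 2 ≤ η * k := by
    have := mul_le_mul_of_nonneg_left hk hη.le
    rwa [← mul_assoc, mul_div_cancel₀ _ hη.ne'] at this
  calc x * (b * exp (-(η * k))) ≤ x * (x * exp (-(2 * log x ^ 2))) := by gcongr
    _ = exp (2 * log x - 2 * log x ^ 2) := by
        rw [sub_eq_add_neg, exp_add, two_mul (log x), exp_add (log x), exp_log hx, mul_assoc]
    _ ≤ exp (log x * -log x) := exp_le_exp.2 (by nlinarith)
    _ = x ^ (-log x) := (rpow_def_of_pos hx _).symm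

end Asymptotics

end CuckooGraph

/-- If `(1+ε)·n ≤ m` then with probability at least `1 − n^{−c·log n}` all connected
components of the cuckoo graph have fewer than `c₂·(log n)²` edges, where `c₂, c > 0` and
the threshold `n₀` depend only on `ε`. -/
theorem cuckoo_all_components_small (ε : ℝ) (hε : 0 < ε) :
    ∃ c₂ c : ℝ, 0 < c₂ ∧ 0 < c ∧ ∃ n₀ : ℕ, ∀ n m : ℕ, n₀ ≤ n → (1 + ε) * n ≤ m →
      cuckooPr n m (fun ω =>
          ∃ v : Fin m ⊕ Fin m, c₂ * Real.log n ^ 2 ≤ (cuckooC n m ω.1 ω.2 v : ℝ))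
        ≤ (n : ℝ) ^ (-(c * Real.log n)) := by
  set η := CuckooGraph.decayRate (1 + ε / 2)
  have hη₀ : 0 < η := CuckooGraph.decayRate_pos (by linarith)
  refine ⟨2 / η, 1, by positivity, one_pos, ?_⟩
  have hlog_atTop := Real.tendsto_log_atTop.comp (tendsto_natCast_atTop_atTop (R := ℝ))
  obtain ⟨n₀, hn₀⟩ := Filter.eventually_atTop.1 <|
    (CuckooGraph.eventually_const_mul_log_sq_add_one_le (2 / η) (half_pos hε)).and <|
    (tendsto_natCast_atTop_atTop.eventually_ge_atTop ((1 + ε / 2) ^ 2)).and <|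
    hlog_atTop.eventually_ge_atTop 2
  refine ⟨n₀, fun n m hn hm ↦ ?_⟩
  obtain ⟨hsmall, hn_large, hlog⟩ := hn₀ n hn
  have hn_pos : (0 : ℝ) < n := lt_of_lt_of_le (by positivity) hn_large
  have : 0 < Real.log n := zero_lt_two.trans_le hlog
  set k := ⌈2 / η * Real.log n ^ 2⌉₊ with hk
  have hk_lt : (k : ℝ) < 2 / η * Real.log n ^ 2 + 1 := Nat.ceil_lt_add_one (by positivity)
  have hkm : (1 + ε / 2) * n ≤ m - k := by linarith
  have hkm' : k < m := by
    have : 0 < (1 + ε / 2) * n := by positivity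
    exact_mod_cast sub_pos.1 (this.trans_le hkm)
  simp only [← Nat.ceil_le, ← hk, one_mul]
  exact (CuckooGraph.cuckooPr_exists_le_cuckooC_le_exp (Nat.ceil_pos.2 (by positivity)) hkm'
    (by linarith) hkm).trans
      (CuckooGraph.mul_exp_le_rpow_neg_log hη₀ hn_large hlog hn_pos (Nat.le_ceil _))
end

section
/- There is a universal constant c > 0 such that for all positive integers n, m, every i ≥ 1, and every real λ > 0, the random cuckoo graph with n edges on parts of size m satisfies Pr(|X_i − E[X_i]| ≥ c·i·λ·√n) ≤ 2·e^{−λ²/2}. -/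
open Classical

/-!
Moving an edge `x` can change the number of edges in the component of a vertex only if that
component contains an endpoint of the old or of the new `x`. The old endpoints share a component,
so at most three components with `i` edges are destroyed, each having at most `2 * i + 1` vertices
(the endpoints of its edges, or one isolated vertex). Hence `X_i` has bounded differences as a
function of the `n` independent hash pairs. Azuma's argument then runs by induction on the
coordinates: averaging out all hash pairs but the first leaves a function of bounded oscillation,
to which Hoeffding's lemma applies, and the sub-Gaussian variance proxies add up.
-/

open Function Set MeasureTheory ProbabilityTheory
open scoped NNReal

section BoundedDifferences

variable {α β : Type*} {mα : MeasurableSpace α} {mβ : MeasurableSpace β}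
  {μ : Measure α} {ν : Measure β}

lemma isFiniteMeasure_of_hasSubgaussianMGF {X : α → ℝ} {c : ℝ≥0}
    (h : HasSubgaussianMGF X c μ) : IsFiniteMeasure μ := by
  simpa [integrable_const_iff] using h.integrable_exp_mul 0

lemma measureReal_abs_ge_le_of_hasSubgaussianMGF {X : α → ℝ} {c : ℝ≥0}
    (h : HasSubgaussianMGF X c μ) {ε : ℝ} (hε : 0 ≤ ε) :
    μ.real {ω | ε ≤ |X ω|} ≤ 2 * Real.exp (-ε ^ 2 / (2 * c)) := by
  have := isFiniteMeasure_of_hasSubgaussianMGF h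
  have hunion : {ω | ε ≤ |X ω|} = {ω | ε ≤ X ω} ∪ {ω | ε ≤ (-X) ω} := by
    ext ω; exact le_abs (a := ε) (b := X ω)
  calc μ.real {ω | ε ≤ |X ω|}
      ≤ μ.real {ω | ε ≤ X ω} + μ.real {ω | ε ≤ (-X) ω} := hunion ▸ measureReal_union_le _ _
    _ ≤ 2 * Real.exp (-ε ^ 2 / (2 * c)) := by
      linarith [h.measure_ge_le hε, h.neg.measure_ge_le hε]

lemma hasSubgaussianMGF_of_forall_sub_le [IsProbabilityMeasure μ] {X : α → ℝ}
    (hX : AEMeasurable X μ) {c : ℝ≥0} (h : ∀ ω ω', X ω - X ω' ≤ c) :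
    HasSubgaussianMGF (fun ω ↦ X ω - ∫ ω', X ω' ∂μ) ((c / 2) ^ 2) μ := by
  have := nonempty_of_isProbabilityMeasure μ
  have hbdd (ω : α) : X ω - c ∈ lowerBounds (range X) := by
    rintro _ ⟨ω', rfl⟩
    linarith [h ω ω']
  have hmem (ω : α) : X ω ∈ Icc (⨅ ω', X ω') ((⨅ ω', X ω') + c) :=
    ⟨ciInf_le ⟨_, hbdd ω⟩ ω,
      sub_le_iff_le_add.1 <| le_ciInf fun ω' ↦ hbdd ω (mem_range_self ω')⟩
  simpa using hasSubgaussianMGF_of_mem_Icc hX (ae_of_all μ hmem)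

lemma hasSubgaussianMGF_prod [SFinite ν] {F : α × β → ℝ} {G : α → ℝ} {c d : ℝ≥0}
    (hF : Measurable F) (hG : HasSubgaussianMGF G c μ)
    (hFG : ∀ x, HasSubgaussianMGF (fun y ↦ F (x, y) - G x) d ν) :
    HasSubgaussianMGF F (c + d) (μ.prod ν) := by
  have hsplit (t : ℝ) (x : α) (y : β) :
      Real.exp (t * F (x, y)) = Real.exp (t * G x) * Real.exp (t * (F (x, y) - G x)) := by
    rw [← Real.exp_add]; ring_nf
  have hslice (t : ℝ) (x : α) : Integrable (fun y ↦ Real.exp (t * F (x, y))) ν := by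
    simpa only [hsplit] using ((hFG x).integrable_exp_mul t).const_mul _
  have hslice_le (t : ℝ) (x : α) :
      ∫ y, Real.exp (t * F (x, y)) ∂ν ≤ Real.exp (t * G x) * Real.exp (d * t ^ 2 / 2) := by
    simp only [hsplit, integral_const_mul]
    gcongr
    exact (hFG x).mgf_le t
  have hbound_int (t : ℝ) :
      Integrable (fun x ↦ Real.exp (t * G x) * Real.exp (d * t ^ 2 / 2)) μ :=
    (hG.integrable_exp_mul t).mul_const _
  have hint (t : ℝ) : Integrable (fun p ↦ Real.exp (t * F p)) (μ.prod ν) := by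
    have hmeas : StronglyMeasurable fun p ↦ Real.exp (t * F p) := by fun_prop
    refine (integrable_prod_iff hmeas.aestronglyMeasurable).2 ⟨ae_of_all μ (hslice t), ?_⟩
    refine (hbound_int t).mono' hmeas.norm.integral_prod_right'.aestronglyMeasurable
      (ae_of_all μ fun x ↦ ?_)
    rw [Real.norm_of_nonneg (by positivity)]
    simpa using hslice_le t x
  have := isFiniteMeasure_of_hasSubgaussianMGF hG
  refine ⟨hint, fun t ↦ ?_⟩
  calc mgf F (μ.prod ν) t
      = ∫ x, ∫ y, Real.exp (t * F (x, y)) ∂ν ∂μ := integral_prod _ (hint t)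
    _ ≤ ∫ x, Real.exp (t * G x) * Real.exp (d * t ^ 2 / 2) ∂μ :=
      integral_mono (hint t).integral_prod_left (hbound_int t) (hslice_le t)
    _ = mgf G μ t * Real.exp (d * t ^ 2 / 2) := integral_mul_const _ _
    _ ≤ Real.exp (c * t ^ 2 / 2) * Real.exp (d * t ^ 2 / 2) := by
      gcongr
      exact hG.mgf_le t
    _ = Real.exp ((c + d : ℝ≥0) * t ^ 2 / 2) := by
      rw [← Real.exp_add]; push_cast; ring_nf

lemma integral_sub_integral_le [IsProbabilityMeasure μ] {X Y : α → ℝ} (hX : Integrable X μ)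
    (hY : Integrable Y μ) {c : ℝ} (h : ∀ ω, X ω - Y ω ≤ c) :
    ∫ ω, X ω ∂μ - ∫ ω, Y ω ∂μ ≤ c := by
  rw [← integral_sub hX hY]
  simpa using integral_mono (hX.sub hY) (integrable_const c) h

lemma integrable_of_hasSubgaussianMGF_sub_const {X : α → ℝ} {c : ℝ≥0} {r : ℝ}
    (h : HasSubgaussianMGF (fun ω ↦ X ω - r) c μ) : Integrable X μ := by
  have := isFiniteMeasure_of_hasSubgaussianMGF h
  exact (h.integrable.add (integrable_const r)).congr (ae_of_all μ fun ω ↦ by simp)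

lemma hasSubgaussianMGF_sub_integral_prod [IsProbabilityMeasure μ] [IsProbabilityMeasure ν]
    {F : α × β → ℝ} (hF : Measurable F) {c d : ℝ≥0}
    (hfst : ∀ x x' y, F (x, y) - F (x', y) ≤ c)
    (hsnd : ∀ x, HasSubgaussianMGF (fun y ↦ F (x, y) - ∫ y', F (x, y') ∂ν) d ν) :
    HasSubgaussianMGF (fun p ↦ F p - ∫ p', F p' ∂(μ.prod ν)) ((c / 2) ^ 2 + d) (μ.prod ν) := by
  let G : α → ℝ := fun x ↦ ∫ y, F (x, y) ∂ν
  have hslice_int (x : α) : Integrable (fun y ↦ F (x, y)) ν :=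
    integrable_of_hasSubgaussianMGF_sub_const (hsnd x)
  have hG : HasSubgaussianMGF (fun x ↦ G x - ∫ x', G x' ∂μ) ((c / 2) ^ 2) μ :=
    hasSubgaussianMGF_of_forall_sub_le
      hF.stronglyMeasurable.integral_prod_right'.measurable.aemeasurable fun x x' ↦
        integral_sub_integral_le (hslice_int x) (hslice_int x') (hfst x x')
  have hFG : HasSubgaussianMGF (fun p ↦ F p - ∫ x, G x ∂μ) ((c / 2) ^ 2 + d) (μ.prod ν) :=
    hasSubgaussianMGF_prod (hF.sub_const _) hG fun x ↦ by simpa [G] using hsnd x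
  rwa [integral_prod F (integrable_of_hasSubgaussianMGF_sub_const hFG)]

lemma hasSubgaussianMGF_sub_integral_comp {e : α ≃ᵐ β} (he : MeasurePreserving e μ ν)
    {X : β → ℝ} {c : ℝ≥0} (h : HasSubgaussianMGF (fun y ↦ X y - ∫ y', X y' ∂ν) c ν) :
    HasSubgaussianMGF (fun x ↦ X (e x) - ∫ x', X (e x') ∂μ) c μ := by
  rw [he.integral_comp']
  rw [← he.map_eq] at h
  exact he.map_eq ▸ h.of_map he.measurable.aemeasurable

lemma hasSubgaussianMGF_sub_integral_pi_fin {n : ℕ} {Ω : Fin n → Type*}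
    [∀ i, MeasurableSpace (Ω i)] {P : ∀ i, Measure (Ω i)} [∀ i, IsProbabilityMeasure (P i)]
    {f : (∀ i, Ω i) → ℝ} (hf : Measurable f) {c : Fin n → ℝ≥0}
    (hdiff : ∀ ω i a, f (update ω i a) - f ω ≤ c i) :
    HasSubgaussianMGF (fun ω ↦ f ω - ∫ ω', f ω' ∂Measure.pi P) (∑ i, (c i / 2) ^ 2)
      (Measure.pi P) := by
  induction n with
  | zero =>
    have hconst (ω : ∀ i, Ω i) : f ω = f default := congrArg f (Subsingleton.elim _ _)
    simp [hconst]
  | succ n ih =>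
    let e := MeasurableEquiv.piFinSuccAbove Ω 0
    have hF : Measurable fun p ↦ f (e.symm p) := hf.comp e.symm.measurable
    have hfst (x x' y) : f (e.symm (x, y)) - f (e.symm (x', y)) ≤ c 0 := by
      have h := hdiff (Fin.insertNth 0 x' y) 0 x
      rwa [Fin.update_insertNth] at h
    have hsnd (x y i a) : f (e.symm (x, update y i a)) - f (e.symm (x, y)) ≤ c i.succ := by
      have h := hdiff (Fin.insertNth 0 x y) (Fin.succAbove 0 i) a
      rwa [← Fin.insertNth_update] at h
    have hprod := hasSubgaussianMGF_sub_integral_prod (μ := P 0) hF hfst fun x ↦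
      ih (P := fun i ↦ P (Fin.succAbove 0 i)) (hF.comp measurable_prodMk_left) (hsnd x)
    rw [Fin.sum_univ_succ]
    simpa only [e, MeasurableEquiv.symm_apply_apply] using
      hasSubgaussianMGF_sub_integral_comp (measurePreserving_piFinSuccAbove P 0) hprod

lemma hasSubgaussianMGF_sub_integral_pi {ι : Type*} [Fintype ι] [DecidableEq ι]
    {Ω : ι → Type*} [∀ i, MeasurableSpace (Ω i)]
    {P : ∀ i, Measure (Ω i)} [∀ i, IsProbabilityMeasure (P i)] {f : (∀ i, Ω i) → ℝ}
    (hf : Measurable f) {c : ι → ℝ≥0}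
    (hdiff : ∀ ω i a, f (update ω i a) - f ω ≤ c i) :
    HasSubgaussianMGF (fun ω ↦ f ω - ∫ ω', f ω' ∂Measure.pi P) (∑ i, (c i / 2) ^ 2)
      (Measure.pi P) := by
  let σ : Fin (Fintype.card ι) ≃ ι := (Fintype.equivFin ι).symm
  let e := MeasurableEquiv.piCongrLeft Ω σ
  have he_update (ω i a) : e (update ω i a) = update (e ω) (σ i) a :=
    piCongrLeft'_symm_update Ω σ.symm ω i a
  have hfin := hasSubgaussianMGF_sub_integral_pi_fin (P := fun i ↦ P (σ i))
    (hf.comp e.measurable) (c := c ∘ σ)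
    fun ω i a ↦ by simpa only [comp_apply, he_update] using hdiff (e ω) (σ i) a
  rw [← σ.sum_comp]
  simpa [e] using hasSubgaussianMGF_sub_integral_comp (measurePreserving_piCongrLeft P σ).symm hfin

end BoundedDifferences

section Uniform

variable {Ω : Type*} [MeasurableSpace Ω] [MeasurableSingletonClass Ω]

lemma measureReal_uniformOn_univ [Finite Ω] (s : Set Ω) :
    (uniformOn univ : Measure Ω).real s = Nat.card s / Nat.card Ω := by
  have := Fintype.ofFinite Ω
  rw [measureReal_def, uniformOn_univ, Measure.count_apply_finite s s.toFinite]
  simp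

lemma integral_uniformOn_univ [Fintype Ω] (f : Ω → ℝ) :
    ∫ ω, f ω ∂(uniformOn univ : Measure Ω) = (∑ ω, f ω) / Nat.card Ω := by
  have hsingleton (ω : Ω) : (uniformOn univ : Measure Ω).real {ω} = (Nat.card Ω : ℝ)⁻¹ := by
    simp [measureReal_uniformOn_univ]
  rw [integral_fintype .of_finite]
  simp_rw [hsingleton, smul_eq_mul, ← Finset.mul_sum]
  rw [div_eq_inv_mul]

lemma pi_uniformOn_univ [Finite Ω] {ι : Type*} [Fintype ι] :
    (Measure.pi fun _ : ι ↦ (uniformOn univ : Measure Ω)) = uniformOn univ := by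
  rw [← uniformOn_pi, pi_univ]

end Uniform

section Multigraph

variable {V E : Type*}

lemma mem_iff_mem_of_eqvGen {r : V → V → Prop} {S : Set V}
    (hS : ∀ a b, r a b → (a ∈ S ↔ b ∈ S)) {u v : V} (h : Relation.EqvGen r u v) :
    u ∈ S ↔ v ∈ S := by
  induction h with
  | rel a b h => exact hS a b h
  | refl => rfl
  | symm _ _ _ ih => exact ih.symm
  | trans _ _ _ _ _ ih₁ ih₂ => exact ih₁.trans ih₂

/-- Connectivity in the multigraph with vertex set `V` and edge set `E`, where `e x` is the pair of
endpoints of the edge `x`; the order of the two endpoints is immaterial. -/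
def edgeConn (e : E → V × V) : V → V → Prop :=
  Relation.EqvGen fun a b ↦ ∃ x, a = (e x).1 ∧ b = (e x).2

/-- The vertex set of the connected component of `v` in the multigraph `e`. -/
def component (e : E → V × V) (v : V) : Set V := {u | edgeConn e u v}

/-- The edge set of the connected component of `v`. As the endpoints of an edge lie in the same
component, it is enough to test the first one. -/
def componentEdges (e : E → V × V) (v : V) : Set E := {x | (e x).1 ∈ component e v}

/-- The vertices lying in components with exactly `i` edges, counted with multiplicity. -/
def verticesWithEdgeCount (e : E → V × V) (i : ℕ) : Set V :=
  {v | (componentEdges e v).ncard = i}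

lemma mem_component_self (e : E → V × V) (v : V) : v ∈ component e v :=
  Relation.EqvGen.refl v

lemma mem_component_comm {e : E → V × V} {u v : V} : u ∈ component e v ↔ v ∈ component e u :=
  ⟨.symm _ _, .symm _ _⟩

lemma component_eq_of_mem {e : E → V × V} {u v : V} (h : u ∈ component e v) :
    component e u = component e v :=
  Set.ext fun _ ↦ ⟨fun hu ↦ hu.trans _ _ _ h, fun hv ↦ hv.trans _ _ _ (h.symm _ _)⟩

lemma fst_mem_component_iff_snd_mem (e : E → V × V) (x : E) (v : V) :
    (e x).1 ∈ component e v ↔ (e x).2 ∈ component e v := by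
  have hx : edgeConn e (e x).1 (e x).2 := .rel _ _ ⟨x, rfl, rfl⟩
  exact ⟨(hx.symm _ _).trans _ _ _, hx.trans _ _ _⟩

lemma component_subset_of_mem {e : E → V × V} {S : Set V} {v : V} (hv : v ∈ S)
    (hS : ∀ x, (e x).1 ∈ S ↔ (e x).2 ∈ S) : component e v ⊆ S := fun _ hu ↦
  (mem_iff_mem_of_eqvGen (by rintro _ _ ⟨x, rfl, rfl⟩; exact hS x) hu).2 hv

lemma component_subset_insert_endpoints (e : E → V × V) (v : V) :
    component e v ⊆ insert v
      ((fun x ↦ (e x).1) '' componentEdges e v ∪ (fun x ↦ (e x).2) '' componentEdges e v) := by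
  set S := insert v
      ((fun x ↦ (e x).1) '' componentEdges e v ∪ (fun x ↦ (e x).2) '' componentEdges e v)
  have hS : S ⊆ component e v := by
    rintro _ (rfl | ⟨x, hx, rfl⟩ | ⟨x, hx, rfl⟩)
    · exact mem_component_self e _
    · exact hx
    · exact (fst_mem_component_iff_snd_mem e x v).1 hx
  refine component_subset_of_mem (mem_insert _ _) fun x ↦ ⟨fun h ↦ ?_, fun h ↦ ?_⟩
  · exact .inr (.inr ⟨x, hS h, rfl⟩)
  · exact .inr (.inl ⟨x, (fst_mem_component_iff_snd_mem e x v).2 (hS h), rfl⟩)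

lemma ncard_component_le [Finite E] (e : E → V × V) (v : V) :
    (component e v).ncard ≤ 2 * (componentEdges e v).ncard + 1 := by
  refine (ncard_le_ncard (component_subset_insert_endpoints e v) (toFinite _)).trans ?_
  refine (ncard_insert_le _ _).trans ?_
  grw [ncard_union_le, ncard_image_le (toFinite _), ncard_image_le (toFinite _), two_mul]

lemma component_finite [Finite E] (e : E → V × V) (v : V) : (component e v).Finite :=
  (toFinite _).subset (component_subset_insert_endpoints e v)

section Update

variable [DecidableEq E] {e : E → V × V} {x : E} {p : V × V} {v : V}

lemma component_update (hx : (e x).1 ∉ component e v) (hp₁ : p.1 ∉ component e v)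
    (hp₂ : p.2 ∉ component e v) : component (update e x p) v = component e v := by
  have hne {y : E} (hy : (e y).1 ∈ component e v) : y ≠ x := by
    rintro rfl; exact hx hy
  apply Subset.antisymm
  · refine component_subset_of_mem (mem_component_self e v) fun y ↦ ?_
    obtain rfl | hy := eq_or_ne y x
    · simp [hp₁, hp₂]
    · simpa [hy] using fst_mem_component_iff_snd_mem e y v
  · suffices component e v ⊆ component e v ∩ component (update e x p) v from
      this.trans inter_subset_right
    refine component_subset_of_mem ⟨mem_component_self e v, mem_component_self _ v⟩ fun y ↦ ?_
    obtain rfl | hy := eq_or_ne y x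
    · simp [hx, ← fst_mem_component_iff_snd_mem]
    · have h := fst_mem_component_iff_snd_mem (update e x p) y v
      rw [update_of_ne hy] at h
      exact and_congr (fst_mem_component_iff_snd_mem e y v) h

lemma componentEdges_update (hx : (e x).1 ∉ component e v) (hp₁ : p.1 ∉ component e v)
    (hp₂ : p.2 ∉ component e v) : componentEdges (update e x p) v = componentEdges e v := by
  ext y
  obtain rfl | hy := eq_or_ne y x
  · simp [componentEdges, component_update hx hp₁ hp₂, hx, hp₁]
  · simp [componentEdges, component_update hx hp₁ hp₂, hy]

end Update

lemma ncard_verticesWithEdgeCount_inter_component_le [Finite E] (e : E → V × V) (i : ℕ) (w : V) :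
    (verticesWithEdgeCount e i ∩ component e w).ncard ≤ 2 * i + 1 := by
  obtain hempty | ⟨v, rfl, hv⟩ := (verticesWithEdgeCount e i ∩ component e w).eq_empty_or_nonempty
  · simp [hempty]
  · calc _ ≤ (component e v).ncard := by
          rw [component_eq_of_mem hv]
          exact ncard_le_ncard inter_subset_right (component_finite e w)
      _ ≤ _ := ncard_component_le e v

lemma ncard_verticesWithEdgeCount_le_update [Finite V] [Finite E] [DecidableEq E]
    (e : E → V × V) (x : E) (p : V × V) (i : ℕ) :
    (verticesWithEdgeCount e i).ncard ≤
      (verticesWithEdgeCount (update e x p) i).ncard + 3 * (2 * i + 1) := by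
  let lost (w : V) : Set V := verticesWithEdgeCount e i ∩ component e w
  have hlost (w : V) : (lost w).ncard ≤ 2 * i + 1 :=
    ncard_verticesWithEdgeCount_inter_component_le e i w
  have hsub : verticesWithEdgeCount e i ⊆
      verticesWithEdgeCount (update e x p) i ∪ (lost (e x).1 ∪ lost p.1 ∪ lost p.2) := by
    intro v hv
    by_contra! hnot
    simp only [lost, mem_union, mem_inter_iff, hv, true_and, not_or,
      mem_component_comm (u := v)] at hnot
    obtain ⟨hne, ⟨hx, hp₁⟩, hp₂⟩ := hnot
    exact hne ((congrArg ncard (componentEdges_update hx hp₁ hp₂)).trans hv)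
  grw [ncard_le_ncard hsub, ncard_union_le, ncard_union_le, ncard_union_le, hlost, hlost, hlost]
  omega

lemma ncard_verticesWithEdgeCount_update_le [Finite V] [Finite E] [DecidableEq E]
    (e : E → V × V) (x : E) (p : V × V) (i : ℕ) :
    (verticesWithEdgeCount (update e x p) i).ncard ≤
      (verticesWithEdgeCount e i).ncard + 3 * (2 * i + 1) := by
  simpa using ncard_verticesWithEdgeCount_le_update (update e x p) x (e x) i

end Multigraph

lemma hasSubgaussianMGF_ncard_verticesWithEdgeCount {V E : Type*} [Finite V] [MeasurableSpace V]
    [MeasurableSingletonClass V] [Fintype E] {Ω : E → Type*} [∀ x, MeasurableSpace (Ω x)]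
    {P : ∀ x, Measure (Ω x)} [∀ x, IsProbabilityMeasure (P x)] {ends : ∀ x, Ω x → V × V}
    (hends : ∀ x, Measurable (ends x)) (i : ℕ) :
    HasSubgaussianMGF
      (fun ω ↦ ((verticesWithEdgeCount (fun x ↦ ends x (ω x)) i).ncard : ℝ) -
        ∫ ω', ((verticesWithEdgeCount (fun x ↦ ends x (ω' x)) i).ncard : ℝ) ∂Measure.pi P)
      (Fintype.card E * (3 * (2 * i + 1) / 2) ^ 2) (Measure.pi P) := by
  let count (e : E → V × V) : ℝ := (verticesWithEdgeCount e i).ncard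
  have hmeas : Measurable fun ω : ∀ x, Ω x ↦ count fun x ↦ ends x (ω x) :=
    (measurable_of_finite count).comp <| measurable_pi_lambda _ fun x ↦
      (hends x).comp (measurable_pi_apply x)
  have hdiff (ω : ∀ x, Ω x) (x : E) (a : Ω x) :
      count (fun y ↦ ends y (update ω x a y)) - count (fun y ↦ ends y (ω y)) ≤
        (3 * (2 * i + 1) : ℝ≥0) := by
    simp only [apply_update, sub_le_iff_le_add', count]
    exact_mod_cast ncard_verticesWithEdgeCount_update_le _ x (ends x a) i
  simpa using hasSubgaussianMGF_sub_integral_pi hmeas hdiff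

section Cuckoo

variable {n m : ℕ}

/-- The pair of hash functions whose hash values of the item `x` are `ω x`. Listing the hash values
item by item turns the sample space into a product over the edges of the cuckoo graph. -/
def hashPairOf : (Fin n → Fin m × Fin m) ≃ HashPair n m :=
  Equiv.arrowProdEquivProdArrow ..

/-- The law of the hash values of the `n` items: independent and uniform. -/
noncomputable abbrev hashLaw (n m : ℕ) : Measure (Fin n → Fin m × Fin m) :=
  Measure.pi fun _ ↦ uniformOn univ

lemma cuckooPr_eq_measureReal (A : HashPair n m → Prop) :
    cuckooPr n m A = (hashLaw n m).real {ω | A (hashPairOf ω)} := by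
  rw [hashLaw, pi_uniformOn_univ, measureReal_uniformOn_univ, cuckooPr, Nat.card_congr hashPairOf]
  congr 2
  exact (Nat.card_congr (hashPairOf.subtypeEquiv fun _ ↦ Iff.rfl)).symm

lemma cuckooE_eq_integral (X : HashPair n m → ℝ) :
    cuckooE n m X = ∫ ω, X (hashPairOf ω) ∂hashLaw n m := by
  rw [hashLaw, pi_uniformOn_univ, integral_uniformOn_univ, cuckooE, hashPairOf.sum_comp,
    Nat.card_congr hashPairOf]

lemma cuckooX_hashPairOf (ω : Fin n → Fin m × Fin m) (i : ℕ) :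
    cuckooX n m (hashPairOf ω).1 (hashPairOf ω).2 i =
      (verticesWithEdgeCount (fun x ↦ Prod.map Sum.inl Sum.inr (ω x)) i).ncard :=
  rfl

lemma hasSubgaussianMGF_cuckooX [NeZero m] (i : ℕ) :
    HasSubgaussianMGF
      (fun ω ↦ (cuckooX n m (hashPairOf ω).1 (hashPairOf ω).2 i : ℝ) -
        cuckooE n m fun ω' ↦ cuckooX n m ω'.1 ω'.2 i)
      (n * (3 * (2 * i + 1) / 2) ^ 2) (hashLaw n m) := by
  have : IsProbabilityMeasure (uniformOn univ : Measure (Fin m × Fin m)) :=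
    isProbabilityMeasure_uniformOn finite_univ univ_nonempty
  let : MeasurableSpace (Fin m ⊕ Fin m) := ⊤
  have h := hasSubgaussianMGF_ncard_verticesWithEdgeCount
    (P := fun _ : Fin n ↦ (uniformOn univ : Measure (Fin m × Fin m)))
    (fun _ ↦ measurable_of_finite (Prod.map Sum.inl Sum.inr)) i
  simpa only [cuckooE_eq_integral, cuckooX_hashPairOf, Fintype.card_fin] using h

end Cuckoo

/-- Azuma-type concentration for `X_i`: there is a universal constant `c > 0` such that
for all positive `n`, `m`, all `i ≥ 1` and all real `λ > 0`,
`Pr(|X_i − E[X_i]| ≥ c·i·λ·√n) ≤ 2·e^{−λ²/2}`. -/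
theorem cuckoo_Xi_concentration :
    ∃ c : ℝ, 0 < c ∧ ∀ n m : ℕ, 0 < n → 0 < m → ∀ i : ℕ, 1 ≤ i → ∀ lam : ℝ, 0 < lam →
      cuckooPr n m (fun ω =>
          c * i * lam * Real.sqrt n ≤
            |(cuckooX n m ω.1 ω.2 i : ℝ)
              - cuckooE n m (fun ω' => (cuckooX n m ω'.1 ω'.2 i : ℝ))|)
        ≤ 2 * Real.exp (-lam ^ 2 / 2) := by
  refine ⟨9 / 2, by norm_num, fun n m hn hm i hi lam hlam ↦ ?_⟩
  have : NeZero m := ⟨hm.ne'⟩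
  have hn' : (0 : ℝ) < n := by exact_mod_cast hn
  have hi' : (2 * i + 1 : ℝ) ≤ 3 * i := by exact_mod_cast (by omega : 2 * i + 1 ≤ 3 * i)
  rw [cuckooPr_eq_measureReal]
  refine (measureReal_abs_ge_le_of_hasSubgaussianMGF
    (hasSubgaussianMGF_cuckooX i) (by positivity)).trans ?_
  gcongr 2 * Real.exp ?_
  push_cast
  rw [neg_div, neg_div, neg_le_neg_iff, le_div_iff₀ (by positivity)]
  calc lam ^ 2 / 2 * (2 * (n * (3 * (2 * i + 1) / 2) ^ 2))
      = lam ^ 2 * n * (3 / 2 * (2 * i + 1)) ^ 2 := by ring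
    _ ≤ lam ^ 2 * n * (3 / 2 * (3 * i)) ^ 2 := by gcongr
    _ = (9 / 2 * i * lam * √n) ^ 2 := by rw [mul_pow _ √(n : ℝ), Real.sq_sqrt hn'.le]; ring
end
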